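/- For I ⊆ {1,…,n}, let C_I := Cone({α_1,…,α_n} ∪ {−α_i : i ∈ I}), and let 2^{[n]} ⊠ V denote the set of equivalence classes of pairs (I,v) ∈ 2^{[n]} × V under (I,v) ∼ (I',v') iff I = I' and v − v' ∈ span(α_i : i ∈ I). Define 𝒢⁺ : GP⁺_Φ → ℚ^{⊕(2^{[n]} ⊠ V)} by letting the coefficient of 𝒢⁺(P) at the class of (I,v) be ∑_{w∈W} tc_{w·(C_I+v)}(P), where tc_{C'}(P) = 1 if C' tightly contains P and 0 otherwise (this coefficient depends only on the class of (I,v), and only finitely many classes give a nonzero coefficient). Then 𝒢⁺ is the universal valuative invariant: 𝒢⁺ is valuative, 𝒢⁺(w·P) = 𝒢⁺(P) for all w ∈ W and P ∈ GP⁺_Φ, and for every valuative invariant g : GP⁺_Φ → A into a ℚ-vector space A there exists a unique ℚ-linear map ψ : ℚ^{⊕(2^{[n]} ⊠ V)} → A with ψ ∘ 𝒢⁺ = g. -/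

import Mathlib

/-!
# The universal valuative invariant of extended generalized permutohedra

Write `C_I` for the cones of the statement and `N_I` for the polar of `C_I`; the `N_I` are the faces
of the closed antidominant chamber, and the `w N_I` are the normal cones of the permutohedron.

*Valuativity* (`PSetup.tight_valuative`). For an extended deformation `P`, tight containment in
`C_I + v` means that `P` meets the affine space `L = lineal(C_I) + v` but not an open half-space
whose boundary contains `L` (given by a functional in the relative interior of `N_I`). The indicator
of this event is the difference of the events "`P` meets `K ∪ L`" and "`P` meets `K`", where `K`
is the half-space. Both `K` and `K ∪ L` are increasing unions of closed convex sets, and "`P` meets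
such a union" is valuative on closed convex sets by an Euler characteristic argument
(`euler_meets`), which reduces to the line one coordinate at a time.

*Generation* (`PSetup.exists_cone_relation`). The half-open chambers obtained from the descent sets
of the Weyl group elements partition the space, so inclusion-exclusion gives
`∑ ± 1_{w N_I} = 1`, the sum over `w ∈ W` and sets `I` of descents of `w`. Multiplied by the
indicator of the cone of functionals bounded on `P`, it stays a sum over cones `w N_J`, as this
cone cuts each face of a chamber in a face (`PSetup.exists_restrict`). Polarizing this relation,
again with the Euler characteristic, writes `1_P` as an integral combination of indicator functions
of cones `w (C_J + u)`. Hence valuative invariants are determined by their values on the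
`C_J + u` (`eq_of_eq_on_cones`).

*Triangularity* (`invG_cone`). The cone `C_J + u` is tightly contained in `w (C_I + v)` if and only
if `J ⊆ I`, `(I, u) ∼ (I, v)` and `w` fixes `N_I` pointwise, because a closed chamber is a
fundamental domain for `W`. So `𝒢⁺(C_J + u) = ∑_{I ⊇ J} m_I e_{(I,u)}` with `m_I > 0`. These
vectors span, which gives uniqueness of `ψ`, and Möbius inversion on the Boolean lattice gives the
`ψ` with the prescribed values on them; generation shows that `ψ ∘ 𝒢⁺ = g` everywhere.
-/

open RealInnerProductSpace

noncomputable def indic {V : Type*} (P : Set V) : V → ℤ := P.indicator 1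

noncomputable def iv (p : Prop) : ℤ := @ite _ p (Classical.propDecidable p) 1 0

def Valuative {V A : Type*} [AddCommGroup A] (Fam : Set (Set V)) (f : Set V → A) : Prop :=
  ∀ (k : ℕ) (a : Fin k → ℤ) (P : Fin k → Set V),
    (∀ i, P i ∈ Fam) → (∑ i, a i • indic (P i)) = 0 → (∑ i, a i • f (P i)) = 0

variable {V : Type*} [NormedAddCommGroup V] [InnerProductSpace ℝ V] [FiniteDimensional ℝ V]

def IsPolyhedron (P : Set V) : Prop :=
  P.Nonempty ∧ ∃ s : Finset (V × ℝ), P = {x | ∀ p ∈ s, ⟪p.1, x⟫ ≤ p.2}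

def IsFace (Q F : Set V) : Prop :=
  ∃ y : V, F.Nonempty ∧ F = {x | x ∈ Q ∧ ∀ q ∈ Q, ⟪y, q⟫ ≤ ⟪y, x⟫}

def IsConvexCone (C : Set V) : Prop :=
  (0 : V) ∈ C ∧ Convex ℝ C ∧ ∀ c : ℝ, 0 ≤ c → ∀ x ∈ C, c • x ∈ C

def coneGen (S : Set V) : Set V := ⋂₀ {C : Set V | IsConvexCone C ∧ S ⊆ C}

def tanCone (Q F : Set V) : Set V := coneGen {d | ∃ q ∈ Q, ∃ v ∈ F, d = q - v}

def normCone (Q F : Set V) : Set V := {y | ∀ v ∈ F, ∀ q ∈ Q, ⟪y, q⟫ ≤ ⟪y, v⟫}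

def IsExtDef (Q P : Set V) : Prop :=
  IsPolyhedron P ∧ ∀ F : Set V, IsFace P F → ∃ 𝒢 : Set (Set V),
    (∀ G ∈ 𝒢, IsFace Q G) ∧ normCone P F = ⋃ G ∈ 𝒢, normCone Q G

def lineal (C : Set V) : Set V := C ∩ (-C)

def transl (v : V) (C : Set V) : Set V := (fun x => v + x) '' C

def TightContains (C : Set V) (v : V) (P : Set V) : Prop :=
  P ⊆ transl v C ∧ (P ∩ transl v (lineal C)).Nonempty

/-- `ivq p` is `1` if the proposition `p` holds and `0` otherwise, in `ℚ`. -/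
noncomputable def ivq (p : Prop) : ℚ := @ite _ p (Classical.propDecidable p) 1 0

/-- The Weyl group of a root system `R`. -/
def WeylGrp (R : Finset V) : Subgroup (V ≃ₗᵢ[ℝ] V) :=
  Subgroup.closure {s | ∃ α ∈ R, ∀ x : V, s x = x - ((2 * ⟪x, α⟫) / ⟪α, α⟫) • α}

/-- The cone `C_I = Cone({α_1, …, α_n} ∪ {-α_i : i ∈ I})`. -/
def coneC {n : ℕ} (α : Fin n → V) (I : Finset (Fin n)) : Set V :=
  coneGen (Set.range α ∪ {x : V | ∃ i ∈ I, x = -α i})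

/-- The equivalence relation on `2^[n] × V`: `(I, v) ∼ (I', v')` iff `I = I'` and
`v - v' ∈ span(α_i : i ∈ I)`.  The quotient is `2^[n] ⊠ V`. -/
def boxSetoid {n : ℕ} (α : Fin n → V) : Setoid (Finset (Fin n) × V) where
  r p q := p.1 = q.1 ∧ p.2 - q.2 ∈ Submodule.span ℝ (α '' ↑p.1)
  iseqv := by
    constructor
    · intro p; exact ⟨rfl, by simp⟩
    · rintro p q ⟨h1, h2⟩
      refine ⟨h1.symm, ?_⟩
      rw [← h1]
      simpa using Submodule.neg_mem _ h2
    · rintro p q r ⟨h1, h2⟩ ⟨h1', h2'⟩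
      refine ⟨h1.trans h1', ?_⟩
      rw [h1] at h2
      rw [h1]
      simpa using Submodule.add_mem _ h2 h2'

lemma iv_pos {p : Prop} (h : p) : iv p = 1 := by simp [iv, h]

lemma iv_neg {p : Prop} (h : ¬p) : iv p = 0 := by simp [iv, h]

lemma iv_congr {p q : Prop} (h : p ↔ q) : iv p = iv q := by rw [propext h]

lemma iv_and (p q : Prop) : iv (p ∧ q) = iv p * iv q := by
  by_cases hp : p <;> by_cases hq : q <;> simp [iv, hp, hq]

/-! ### The Euler characteristic of convex sets is valuative -/

/-- The one-dimensional case: subtracting from the relation at `τ` the relation at a point slightly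
to the right of `τ` leaves the relation between those intervals whose right end is `τ`. -/
lemma euler_line {ι : Type*} (s : Finset ι) (a : ι → ℤ) (A : ι → Set ℝ)
    (hc : ∀ i ∈ s, IsCompact (A i)) (hv : ∀ i ∈ s, Convex ℝ (A i))
    (h : ∀ τ, ∑ i ∈ s, a i * iv (τ ∈ A i) = 0) :
    ∑ i ∈ s, a i * iv (A i).Nonempty = 0 := by
  classical
  have key : ∀ τ, ∑ i ∈ s, a i * iv (IsGreatest (A i) τ) = 0 := by
    intro τ
    have ev : ∀ᶠ t in nhdsWithin τ (Set.Ioi τ), ∀ i ∈ s,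
        (t ∈ A i ↔ (τ ∈ A i ∧ ∃ t' ∈ A i, τ < t')) := by
      rw [Filter.eventually_all_finset]
      intro i hi
      by_cases h1 : τ ∈ A i
      · by_cases h2 : ∃ t' ∈ A i, τ < t'
        · obtain ⟨t', ht', hlt⟩ := h2
          filter_upwards [Ioo_mem_nhdsGT hlt] with t ht
          refine ⟨fun _ => ⟨h1, t', ht', hlt⟩, fun _ => ?_⟩
          exact (hv i hi).ordConnected.out h1 ht' ⟨ht.1.le, ht.2.le⟩
        · filter_upwards [self_mem_nhdsWithin] with t ht
          exact ⟨fun h => absurd ⟨t, h, ht⟩ h2, fun h => absurd h.2 h2⟩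
      · have : (A i)ᶜ ∈ nhdsWithin τ (Set.Ioi τ) :=
          nhdsWithin_le_nhds ((hc i hi).isClosed.isOpen_compl.mem_nhds h1)
        filter_upwards [this] with t ht
        exact ⟨fun h => absurd h ht, fun h => absurd h.1 h1⟩
    obtain ⟨t, ht⟩ := ev.exists
    have e1 := h τ
    have e2 := h t
    have : ∑ i ∈ s, a i * iv (IsGreatest (A i) τ)
        = ∑ i ∈ s, a i * iv (τ ∈ A i) - ∑ i ∈ s, a i * iv (t ∈ A i) := by
      rw [← Finset.sum_sub_distrib]
      refine Finset.sum_congr rfl fun i hi => ?_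
      rw [iv_congr (ht i hi)]
      by_cases h1 : τ ∈ A i
      · by_cases h2 : ∃ t' ∈ A i, τ < t'
        · have hng : ¬IsGreatest (A i) τ := by
            rintro ⟨-, h3⟩
            obtain ⟨t', ht', hlt⟩ := h2
            exact absurd (h3 ht') (not_le.2 hlt)
          rw [iv_neg hng, iv_pos h1, iv_pos ⟨h1, h2⟩]
          ring
        · have hg : IsGreatest (A i) τ := by
            refine ⟨h1, fun x hx => ?_⟩
            by_contra hlt
            exact h2 ⟨x, hx, not_le.1 hlt⟩
          rw [iv_pos hg, iv_pos h1, iv_neg (fun h => h2 h.2)]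
          ring
      · rw [iv_neg h1, iv_neg (fun h => h1 h.1), iv_neg (fun h => h1 h.1)]
        ring
    rw [this, e1, e2, sub_zero]
  have tot : ∑ τ ∈ s.image (fun i => sSup (A i)), ∑ i ∈ s, a i * iv (IsGreatest (A i) τ) = 0 :=
    Finset.sum_eq_zero fun τ _ => key τ
  rw [Finset.sum_comm] at tot
  rw [← tot]
  refine Finset.sum_congr rfl fun i hi => ?_
  by_cases hne : (A i).Nonempty
  · have hg := (hc i hi).isGreatest_sSup hne
    rw [Finset.sum_eq_single (sSup (A i))]
    · rw [iv_pos hne, iv_pos hg]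
    · intro τ _ hτ
      rw [iv_neg, mul_zero]
      exact fun h => hτ (h.unique hg)
    · intro h
      exact absurd (Finset.mem_image_of_mem _ hi) h
  · rw [iv_neg hne, mul_zero, Finset.sum_eq_zero]
    intro τ _
    rw [iv_neg, mul_zero]
    exact fun h => hne ⟨τ, h.1⟩

/-- Coordinate by coordinate reduction to the one-dimensional case. -/
lemma euler_compact {ι : Type*} (s : Finset ι) (a : ι → ℤ) (P : ι → Set V)
    (hc : ∀ i ∈ s, IsCompact (P i)) (hv : ∀ i ∈ s, Convex ℝ (P i))
    (h : ∀ x, ∑ i ∈ s, a i * iv (x ∈ P i) = 0) :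
    ∑ i ∈ s, a i * iv (P i).Nonempty = 0 := by
  classical
  set b := Module.finBasis ℝ V
  have key : ∀ S : Finset (Fin (Module.finrank ℝ V)), ∀ t : Fin (Module.finrank ℝ V) → ℝ,
      ∑ i ∈ s, a i * iv (∃ x ∈ P i, ∀ j ∉ S, b.repr x j = t j) = 0 := by
    intro S
    induction S using Finset.induction_on with
    | empty =>
      intro t
      rw [← h (b.equivFun.symm t)]
      refine Finset.sum_congr rfl fun i _ => ?_
      congr 1
      apply iv_congr
      constructor
      · rintro ⟨x, hx, hxt⟩
        convert hx
        rw [LinearEquiv.symm_apply_eq]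
        ext j
        rw [← hxt j (by simp), Module.Basis.equivFun_apply]
      · intro hx
        refine ⟨_, hx, fun j _ => ?_⟩
        rw [← Module.Basis.equivFun_apply, LinearEquiv.apply_symm_apply]
    | insert j S hj ih =>
      intro t
      have cont : ∀ k, Continuous (fun x => b.coord k x) := fun k =>
        LinearMap.continuous_of_finiteDimensional _
      have conv := euler_line s a
        (fun i => (fun x => b.coord j x) '' (P i ∩ {x | ∀ k ∉ insert j S, b.repr x k = t k})) ?_ ?_ ?_
      · rw [← conv]
        refine Finset.sum_congr rfl fun i _ => ?_
        congr 1
        apply iv_congr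
        rw [Set.image_nonempty]
        rfl
      · intro i hi
        refine IsCompact.image ((hc i hi).inter_right ?_) (cont j)
        simp only [Set.ofPred_forall]
        exact isClosed_iInter fun k => isClosed_iInter fun _ =>
          isClosed_eq (cont k) continuous_const
      · intro i hi
        refine Convex.linear_image ((hv i hi).inter ?_) (b.coord j)
        intro x hx y hy c d _ _ hcd k hk
        simp only [map_add, map_smul, Finsupp.add_apply, Finsupp.smul_apply, smul_eq_mul,
          hx k hk, hy k hk]
        rw [← add_mul, hcd, one_mul]
      · intro τ
        rw [← ih (Function.update t j τ)]
        refine Finset.sum_congr rfl fun i _ => ?_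
        congr 1
        apply iv_congr
        constructor
        · rintro ⟨x, ⟨hx, hxt⟩, rfl⟩
          refine ⟨x, hx, fun k hk => ?_⟩
          by_cases hkj : k = j
          · subst hkj; simp
          · rw [Function.update_of_ne hkj]
            exact hxt k (by simp [hkj, hk])
        · rintro ⟨x, hx, hxt⟩
          refine ⟨x, ⟨hx, fun k hk => ?_⟩, by simpa using hxt j hj⟩
          simp only [Finset.mem_insert, not_or] at hk
          rw [hxt k hk.2, Function.update_of_ne hk.1]
  have := key Finset.univ 0
  rw [← this]
  refine Finset.sum_congr rfl fun i _ => ?_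
  congr 1
  apply iv_congr
  simp [Set.Nonempty]

/-- If closed convex sets satisfy a linear relation of indicator functions, the same relation holds
for "meets `K`", provided `K` is an increasing union of closed convex sets. Closedness of `K` itself
is not needed, which is what makes half-open test sets available. -/
lemma euler_meets {ι : Type*} (s : Finset ι) (a : ι → ℤ) (P : ι → Set V)
    (hc : ∀ i ∈ s, IsClosed (P i)) (hv : ∀ i ∈ s, Convex ℝ (P i))
    (h : ∀ x, ∑ i ∈ s, a i * iv (x ∈ P i) = 0)
    (K : ℕ → Set V) (hK : Monotone K) (hKc : ∀ m, IsClosed (K m)) (hKv : ∀ m, Convex ℝ (K m)) :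
    ∑ i ∈ s, a i * iv (∃ x ∈ P i, ∃ m, x ∈ K m) = 0 := by
  have ev : ∀ᶠ m : ℕ in Filter.atTop, ∀ i ∈ s,
      ((P i ∩ (K m ∩ Metric.closedBall 0 m)).Nonempty ↔ ∃ x ∈ P i, ∃ m, x ∈ K m) := by
    rw [Filter.eventually_all_finset]
    intro i hi
    by_cases hx : ∃ x ∈ P i, ∃ m, x ∈ K m
    · obtain ⟨x, hxP, m, hxm⟩ := hx
      filter_upwards [Filter.eventually_ge_atTop m, Filter.eventually_ge_atTop ⌈‖x‖⌉₊] with k h1 h2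
      refine ⟨fun _ => ⟨x, hxP, m, hxm⟩, fun _ => ⟨x, hxP, hK h1 hxm, ?_⟩⟩
      simpa using (Nat.ceil_le.1 h2)
    · refine Filter.Eventually.of_forall fun k => ⟨?_, fun h => absurd h hx⟩
      rintro ⟨x, h1, h2, -⟩
      exact ⟨x, h1, k, h2⟩
  obtain ⟨m, hm⟩ := ev.exists
  have := euler_compact s a (fun i => P i ∩ (K m ∩ Metric.closedBall 0 m)) ?_ ?_ ?_
  · rw [← this]
    exact Finset.sum_congr rfl fun i hi => by rw [iv_congr (hm i hi)]
  · intro i hi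
    exact ((isCompact_closedBall _ _).inter_left (hKc m)).inter_left (hc i hi)
  · intro i hi
    exact (hv i hi).inter ((hKv m).inter (convex_closedBall _ _))
  · intro x
    have := congrArg (fun c => c * iv (x ∈ K m ∩ Metric.closedBall 0 m)) (h x)
    simp only [zero_mul, Finset.sum_mul] at this
    rw [← this]
    refine Finset.sum_congr rfl fun i _ => ?_
    rw [mul_assoc, ← iv_and]
    rfl

/-- The inhomogeneous form of `euler_meets`, for a single closed convex test set. -/
lemma euler_meets_eq {ι : Type*} (s : Finset ι) (a : ι → ℤ) (P : ι → Set V) (B : Set V)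
    (hc : ∀ i ∈ s, IsClosed (P i)) (hv : ∀ i ∈ s, Convex ℝ (P i))
    (hBc : IsClosed B) (hBv : Convex ℝ B)
    (h : ∀ x, ∑ i ∈ s, a i * iv (x ∈ P i) = iv (x ∈ B))
    (K : Set V) (hKc : IsClosed K) (hKv : Convex ℝ K) :
    ∑ i ∈ s, a i * iv (∃ x ∈ P i, x ∈ K) = iv (∃ x ∈ B, x ∈ K) := by
  have := euler_meets (Finset.insertNone s) (fun o => o.elim (-1) a) (fun o => o.elim B P)
    ?_ ?_ ?_ (fun _ => K) monotone_const (fun _ => hKc) (fun _ => hKv)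
  · simp only [Finset.sum_insertNone, Option.elim, exists_const] at this
    linarith
  · intro o ho
    cases o with
    | none => exact hBc
    | some i => exact hc i (by simpa using ho)
  · intro o ho
    cases o with
    | none => exact hBv
    | some i => exact hv i (by simpa using ho)
  · intro x
    simp only [Finset.sum_insertNone, Option.elim]
    rw [h x]; ring

/-- `Valuative` for families indexed by an arbitrary finite set, with pointwise relations. -/
lemma Valuative.sum_eq_zero {X A : Type*} [AddCommGroup A] {Fam : Set (Set X)} {f : Set X → A}
    (hf : Valuative Fam f) {ι : Type*} (s : Finset ι) (a : ι → ℤ) (P : ι → Set X)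
    (hP : ∀ i ∈ s, P i ∈ Fam) (h : ∀ x, ∑ i ∈ s, a i * iv (x ∈ P i) = 0) :
    ∑ i ∈ s, a i • f (P i) = 0 := by
  have := hf s.card (fun k => a (s.equivFin.symm k)) (fun k => P (s.equivFin.symm k))
    (fun k => hP _ (s.equivFin.symm k).2) ?_
  · rw [Equiv.sum_comp s.equivFin.symm (fun i : s => a i • f (P i))] at this
    rwa [Finset.sum_coe_sort s (fun i => a i • f (P i))] at this
  · rw [Equiv.sum_comp s.equivFin.symm (fun i : s => a i • indic (P i)),
      Finset.sum_coe_sort s (fun i => a i • indic (P i))]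
    funext x
    rw [Finset.sum_apply, Pi.zero_apply, ← h x]
    refine Finset.sum_congr rfl fun i _ => ?_
    by_cases hx : x ∈ P i <;> simp [indic, iv, hx]

lemma relation_pointwise {X : Type*} {k : ℕ} {a : Fin k → ℤ} {P : Fin k → Set X}
    (h : (∑ i, a i • indic (P i)) = 0) (x : X) : ∑ i, a i * iv (x ∈ P i) = 0 := by
  have := congrFun h x
  rw [Finset.sum_apply, Pi.zero_apply] at this
  rw [← this]
  refine Finset.sum_congr rfl fun i _ => ?_
  by_cases hx : x ∈ P i <;> simp [indic, iv, hx]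

/-! ### The Weyl group -/

set_option linter.unusedSectionVars false

lemma isom_mul_apply (u w : V ≃ₗᵢ[ℝ] V) (x : V) : (u * w) x = u (w x) := rfl

/-- The orthogonal reflection in the hyperplane perpendicular to `β`. -/
noncomputable def sr (β : V) : V ≃ₗᵢ[ℝ] V := (ℝ ∙ β)ᗮ.reflection

lemma sr_apply (β x : V) : sr β x = x - ((2 * ⟪x, β⟫) / ⟪β, β⟫) • β := by
  rw [sr, Submodule.reflection_orthogonal_apply, Submodule.reflection_singleton_apply,
    real_inner_self_eq_norm_sq, real_inner_comm]
  simp only [RCLike.ofReal_real_eq_id, id]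
  rw [two_smul, ← add_smul]
  rw [neg_sub]
  congr 2
  ring

lemma sr_mul_self (β : V) : sr β * sr β = 1 := Submodule.reflection_mul_reflection _

lemma sr_inv (β : V) : (sr β)⁻¹ = sr β := Submodule.reflection_inv

lemma conj_sr (w : V ≃ₗᵢ[ℝ] V) (β : V) : w * sr β = sr (w β) * w := by
  ext x
  simp only [LinearIsometryEquiv.coe_mul, Function.comp_apply, sr_apply, map_sub, map_smul,
    LinearIsometryEquiv.inner_map_map]

lemma weyl_eq (R : Finset V) : WeylGrp R = Subgroup.closure (sr '' (R : Set V)) := by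
  unfold WeylGrp
  congr 1
  ext s
  constructor
  · rintro ⟨α, hα, h⟩
    refine ⟨α, hα, ?_⟩
    ext x
    rw [h, sr_apply]
  · rintro ⟨α, hα, rfl⟩
    exact ⟨α, hα, sr_apply α⟩

lemma sr_mem (R : Finset V) {β : V} (h : β ∈ R) : sr β ∈ WeylGrp R := by
  rw [weyl_eq]
  exact Subgroup.subset_closure ⟨β, h, rfl⟩

/-- `b` is a base (simple system) of the reduced root system `R`: it consists of roots, and the
coordinates of each root have constant sign. -/
structure RBase (R : Finset V) {n : ℕ} (b : Module.Basis (Fin n) ℝ V) : Prop where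
  zero_notMem : (0 : V) ∉ R
  refl_mem : ∀ α ∈ R, ∀ β ∈ R, sr α β ∈ R
  reduced : ∀ α ∈ R, ∀ c : ℝ, c • α ∈ R → c = 1 ∨ c = -1
  mem : ∀ i, b i ∈ R
  sgn : ∀ β ∈ R, (∀ i, 0 ≤ b.repr β i) ∨ (∀ i, b.repr β i ≤ 0)

namespace RBase

variable {R : Finset V} {n : ℕ} {b : Module.Basis (Fin n) ℝ V}

lemma weyl_mem (hb : RBase R b) {w : V ≃ₗᵢ[ℝ] V} (hw : w ∈ WeylGrp R) {β : V} (hβ : β ∈ R) :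
    w β ∈ R := by
  rw [weyl_eq] at hw
  induction hw using Subgroup.closure_induction generalizing β with
  | mem x hx =>
    obtain ⟨α, hα, rfl⟩ := hx
    exact hb.refl_mem α hα β hβ
  | one => exact hβ
  | mul x y _ _ hx hy => exact hx (hy hβ)
  | inv x _ hx =>
    classical
    have hsurj : R.image x = R := by
      refine Finset.eq_of_subset_of_card_le ?_ ?_
      · intro y hy
        obtain ⟨z, hz, rfl⟩ := Finset.mem_image.1 hy
        exact hx hz
      · rw [Finset.card_image_of_injective _ x.injective]
    rw [← hsurj] at hβ
    obtain ⟨γ, hγ, rfl⟩ := Finset.mem_image.1 hβ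
    change x⁻¹ (x γ) ∈ R
    rw [← isom_mul_apply, inv_mul_cancel]
    exact hγ

lemma ne_zero (hb : RBase R b) {β : V} (hβ : β ∈ R) : β ≠ 0 := fun h => hb.zero_notMem (h ▸ hβ)

lemma inner_pos (hb : RBase R b) {β : V} (hβ : β ∈ R) : 0 < ⟪β, β⟫ := by
  have := hb.ne_zero hβ
  exact real_inner_self_pos.2 this

lemma neg_mem (hb : RBase R b) {β : V} (hβ : β ∈ R) : -β ∈ R := by
  have := hb.refl_mem β hβ β hβ
  rw [sr_apply, mul_div_assoc, div_self (hb.inner_pos hβ).ne'] at this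
  convert this using 1
  module

/-- Bases are permuted by the Weyl group. -/
lemma map (hb : RBase R b) {w : V ≃ₗᵢ[ℝ] V} (hw : w ∈ WeylGrp R) :
    RBase R (b.map w.toLinearEquiv) where
  zero_notMem := hb.zero_notMem
  refl_mem := hb.refl_mem
  reduced := hb.reduced
  mem i := hb.weyl_mem hw (hb.mem i)
  sgn β hβ := hb.sgn (w⁻¹ β) (hb.weyl_mem (inv_mem hw) hβ)

lemma not_both (hb : RBase R b) {β : V} (hβ : β ∈ R) (h1 : ∀ i, 0 ≤ b.repr β i)
    (h2 : ∀ i, b.repr β i ≤ 0) : False := by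
  apply hb.ne_zero hβ
  apply b.repr.injective
  ext i
  simpa using le_antisymm (h2 i) (h1 i)

/-- A positive root made negative by the simple reflection in `b i` is `b i`. -/
lemma eq_simple (hb : RBase R b) {β : V} (hβ : β ∈ R) (hpos : ∀ i, 0 ≤ b.repr β i) (i : Fin n)
    (hneg : ∀ j, b.repr (sr (b i) β) j ≤ 0) : β = b i := by
  have hz : ∀ j, j ≠ i → b.repr β j = 0 := by
    intro j hj
    have := hneg j
    rw [sr_apply] at this
    simp only [map_sub, map_smul, Module.Basis.repr_self, Finsupp.sub_apply, Finsupp.smul_apply,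
      Finsupp.single_eq_of_ne hj, smul_zero, sub_zero] at this
    exact le_antisymm this (hpos j)
  have he : β = (b.repr β i) • b i := by
    apply b.repr.injective
    ext j
    by_cases hj : j = i
    · subst hj; simp
    · simp [hz j hj, Finsupp.single_eq_of_ne hj]
  rcases hb.reduced (b i) (hb.mem i) (b.repr β i) (he ▸ hβ) with h | h
  · rw [he, h, one_smul]
  · have := hpos i
    rw [h] at this
    linarith

/-- The product of a word in the simple reflections. -/
noncomputable def word (b : Module.Basis (Fin n) ℝ V) (L : List (Fin n)) : V ≃ₗᵢ[ℝ] V :=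
  (L.map fun i => sr (b i)).prod

lemma word_mem (hb : RBase R b) (L : List (Fin n)) : word b L ∈ WeylGrp R := by
  apply Subgroup.list_prod_mem
  intro x hx
  obtain ⟨i, -, rfl⟩ := List.mem_map.1 hx
  exact sr_mem R (hb.mem i)

/-- Deletion: if a word sends `b i` to a negative root, then multiplying it by the reflection in
`b i` amounts to deleting one of its letters. -/
lemma deletion (hb : RBase R b) (i : Fin n) (L : List (Fin n))
    (h : ∀ j, b.repr (word b L (b i)) j ≤ 0) :
    ∃ L', L'.length + 1 = L.length ∧ word b L * sr (b i) = word b L' := by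
  induction L with
  | nil =>
    have := h i
    simp [word] at this
    linarith
  | cons k L ih =>
    have hk : word b (k :: L) = sr (b k) * word b L := by simp [word]
    have hm : word b L (b i) ∈ R := hb.weyl_mem (hb.word_mem L) (hb.mem i)
    rcases hb.sgn _ hm with hp | hn
    · rw [hk] at h
      have he := hb.eq_simple hm hp k h
      refine ⟨L, by simp, ?_⟩
      rw [hk, mul_assoc, conj_sr, he, ← mul_assoc, sr_mul_self, one_mul]
    · obtain ⟨L', hL', hw⟩ := ih hn
      refine ⟨k :: L', by simp [hL'], ?_⟩
      rw [hk, mul_assoc, hw]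
      simp [word]

/-- Every positive root is the image of a simple root under a word: a positive root of minimal
height in its orbit is simple. -/
lemma exists_word_simple (hb : RBase R b) {β : V} (hβ : β ∈ R) (hpos : ∀ i, 0 ≤ b.repr β i) :
    ∃ L i, word b L β = b i := by
  classical
  let S := R.filter fun γ => (∃ L, word b L β = γ) ∧ ∀ i, 0 ≤ b.repr γ i
  have hS : S.Nonempty := ⟨β, by
    refine Finset.mem_filter.2 ⟨hβ, ⟨[], by simp [word]⟩, hpos⟩⟩
  obtain ⟨γ, hγ, hmin⟩ := S.exists_min_image (fun γ => ∑ i, b.repr γ i) hS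
  obtain ⟨hγR, ⟨L, hL⟩, hγp⟩ := Finset.mem_filter.1 hγ
  have hpos' : ∃ i, 0 < ⟪γ, b i⟫ := by
    by_contra hcon
    push Not at hcon
    have h1 := hb.inner_pos hγR
    have h2 : ⟪γ, γ⟫ = ∑ i, b.repr γ i * ⟪γ, b i⟫ := by
      conv_lhs => rw [← b.sum_repr γ]
      rw [b.sum_repr γ]
      conv_lhs => arg 3; rw [← b.sum_repr γ]
      simp only [inner_sum, inner_smul_right]
    rw [h2] at h1
    exact absurd h1 (not_lt.2 (Finset.sum_nonpos fun i _ =>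
      mul_nonpos_of_nonneg_of_nonpos (hγp i) (hcon i)))
  obtain ⟨i, hi⟩ := hpos'
  have hsm : sr (b i) γ ∈ R := hb.refl_mem _ (hb.mem i) _ hγR
  rcases hb.sgn _ hsm with hp | hn
  · exfalso
    have := hmin (sr (b i) γ) (Finset.mem_filter.2 ⟨hsm, ⟨i :: L, by simp [word, ← hL]⟩, hp⟩)
    rw [sr_apply] at this
    simp only [map_sub, map_smul, Module.Basis.repr_self, Finsupp.sub_apply, Finsupp.smul_apply,
      Finset.sum_sub_distrib, smul_eq_mul, ← Finset.mul_sum] at this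
    have h1 : ∑ j, (Finsupp.single i (1 : ℝ)) j = 1 := by
      simp [Finsupp.single_apply]
    rw [h1] at this
    have h2 : 0 < 2 * ⟪γ, b i⟫ / ⟪b i, b i⟫ := by
      have := hb.inner_pos (hb.mem i)
      positivity
    linarith
  · exact ⟨L, i, by rw [hL, hb.eq_simple hγR hγp i hn]⟩

lemma word_append (L L' : List (Fin n)) : word b (L ++ L') = word b L * word b L' := by
  simp [word]

lemma word_reverse (L : List (Fin n)) : word b L.reverse = (word b L)⁻¹ := by
  induction L with
  | nil => simp [word]
  | cons k L ih =>
    rw [List.reverse_cons, word_append, ih]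
    simp [word, sr_inv]

lemma sr_neg (β : V) : sr (-β) = sr β := by
  ext x
  simp only [sr_apply, inner_neg_right, inner_neg_left, neg_neg, smul_neg, mul_neg, neg_div,
    neg_smul]

/-- The simple reflections generate the Weyl group. -/
lemma exists_word (hb : RBase R b) {w : V ≃ₗᵢ[ℝ] V} (hw : w ∈ WeylGrp R) :
    ∃ L, w = word b L := by
  have hpos : ∀ β ∈ R, (∀ i, 0 ≤ b.repr β i) → ∃ L, sr β = word b L := by
    intro β hβ hp
    obtain ⟨L, i, hL⟩ := hb.exists_word_simple hβ hp
    refine ⟨L.reverse ++ [i] ++ L, ?_⟩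
    rw [word_append, word_append, word_reverse]
    have : word b [i] = sr (b i) := by simp [word]
    rw [this, mul_assoc, ← hL, ← conj_sr, inv_mul_cancel_left]
  rw [weyl_eq] at hw
  induction hw using Subgroup.closure_induction with
  | mem x hx =>
    obtain ⟨β, hβ, rfl⟩ := hx
    rcases hb.sgn β hβ with hp | hn
    · exact hpos β hβ hp
    · rw [← sr_neg]
      exact hpos (-β) (hb.neg_mem hβ) fun i => by simpa using hn i
  | one => exact ⟨[], by simp [word]⟩
  | mul x y _ _ hx hy =>
    obtain ⟨L, rfl⟩ := hx
    obtain ⟨L', rfl⟩ := hy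
    exact ⟨L ++ L', (word_append L L').symm⟩
  | inv x _ hx =>
    obtain ⟨L, rfl⟩ := hx
    exact ⟨L.reverse, (word_reverse L).symm⟩

/-- Induction along reduced words: `w * sr (b i)` is reached from `w` only when it is longer, that
is, when `w` keeps `b i` positive. -/
lemma weyl_induction (hb : RBase R b) (Q : (V ≃ₗᵢ[ℝ] V) → Prop) (h1 : Q 1)
    (hs : ∀ w ∈ WeylGrp R, ∀ i, Q w → (∀ j, 0 ≤ b.repr (w (b i)) j) → Q (w * sr (b i)))
    {w : V ≃ₗᵢ[ℝ] V} (hw : w ∈ WeylGrp R) : Q w := by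
  have key : ∀ N, ∀ L : List (Fin n), L.length ≤ N → Q (word b L) := by
    intro N
    induction N with
    | zero =>
      intro L hL
      rw [Nat.le_zero, List.length_eq_zero_iff] at hL
      subst hL
      simpa [word] using h1
    | succ N ih =>
      intro L hL
      rcases L.eq_nil_or_concat' with rfl | ⟨L, i, rfl⟩
      · simpa [word] using h1
      · have hL' : L.length ≤ N := by simpa using hL
        have he : word b (L ++ [i]) = word b L * sr (b i) := by simp [word]
        rw [he]
        rcases hb.sgn _ (hb.weyl_mem (hb.word_mem L) (hb.mem i)) with hp | hn
        · exact hs _ (hb.word_mem L) i (ih L hL') hp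
        · obtain ⟨L', hlen, hw⟩ := hb.deletion i L hn
          rw [hw]
          exact ih L' (by omega)
  obtain ⟨L, rfl⟩ := hb.exists_word hw
  exact key L.length L le_rfl

/-- Points of the closed antidominant chamber are minimal in their orbit, for the order given by the
cone of positive roots. -/
lemma orbit_sub_nonneg (hb : RBase R b) {x : V} (hx : ∀ i, ⟪x, b i⟫ ≤ 0)
    {w : V ≃ₗᵢ[ℝ] V} (hw : w ∈ WeylGrp R) : ∀ j, 0 ≤ b.repr (w x - x) j := by
  refine hb.weyl_induction (fun w => ∀ j, 0 ≤ b.repr (w x - x) j) (by simp) ?_ hw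
  intro w hw i ih hp j
  have h1 : (w * sr (b i)) x - x = (w x - x) + (-((2 * ⟪x, b i⟫) / ⟪b i, b i⟫)) • w (b i) := by
    rw [isom_mul_apply, sr_apply, map_sub, map_smul]
    module
  rw [h1]
  simp only [map_add, map_smul, Finsupp.add_apply, Finsupp.smul_apply, smul_eq_mul]
  refine add_nonneg (ih j) (mul_nonneg ?_ (hp j))
  have := hb.inner_pos (hb.mem i)
  rw [← neg_div]
  refine div_nonneg ?_ this.le
  linarith [hx i]

lemma inner_eq_sum (b : Module.Basis (Fin n) ℝ V) (y x : V) :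
    ⟪y, x⟫ = ∑ i, b.repr x i * ⟪y, b i⟫ := by
  conv_lhs => rw [← b.sum_repr x]
  simp only [inner_sum, inner_smul_right]

/-- The closed antidominant chamber meets each orbit at most once. -/
lemma chamber_unique (hb : RBase R b) {x : V} (hx : ∀ i, ⟪x, b i⟫ ≤ 0)
    {w : V ≃ₗᵢ[ℝ] V} (hw : w ∈ WeylGrp R) (hwx : ∀ i, ⟪w x, b i⟫ ≤ 0) : w x = x := by
  have h1 : ⟪w x, w x - x⟫ ≤ 0 := by
    rw [inner_eq_sum b]
    exact Finset.sum_nonpos fun i _ =>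
      mul_nonpos_of_nonneg_of_nonpos (hb.orbit_sub_nonneg hx hw i) (hwx i)
  have h2 : ⟪w x - x, w x - x⟫ ≤ 0 := by
    rw [inner_sub_right, LinearIsometryEquiv.inner_map_map] at h1
    rw [inner_sub_sub_self, LinearIsometryEquiv.inner_map_map, real_inner_comm (w x) x]
    linarith
  have h3 : w x - x = 0 := by
    by_contra h
    exact absurd (real_inner_self_pos.2 h) (not_lt.2 h2)
  exact sub_eq_zero.1 h3

/-- The Weyl group acts freely on the open antidominant chamber. -/
lemma stabilizer_trivial (hb : RBase R b) {x : V} (hx : ∀ i, ⟪x, b i⟫ < 0)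
    {w : V ≃ₗᵢ[ℝ] V} (hw : w ∈ WeylGrp R) (hwx : w x = x) : w = 1 := by
  refine hb.weyl_induction (fun w => w x = x → w = 1) (fun _ => rfl) ?_ hw hwx
  intro w hw i _ hp he
  exfalso
  rw [isom_mul_apply, sr_apply, map_sub, map_smul] at he
  have hc : 0 < -((2 * ⟪x, b i⟫) / ⟪b i, b i⟫) := by
    have := hb.inner_pos (hb.mem i)
    rw [← neg_div]
    exact div_pos (by linarith [hx i]) this
  have h1 : (-((2 * ⟪x, b i⟫) / ⟪b i, b i⟫)) • w (b i) = -(w x - x) := by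
    rw [eq_neg_iff_add_eq_zero]
    rw [← sub_eq_zero.2 he]
    module
  refine hb.not_both (hb.weyl_mem hw (hb.mem i)) hp fun j => ?_
  have h2 := congrArg (fun v => b.repr v j) h1
  simp only [map_smul, map_neg, Finsupp.smul_apply, Finsupp.neg_apply, smul_eq_mul] at h2
  have h3 := hb.orbit_sub_nonneg (fun i => (hx i).le) hw j
  by_contra h4
  have := mul_pos hc (not_le.1 h4)
  linarith

lemma exists_inner (b : Module.Basis (Fin n) ℝ V) (c : Fin n → ℝ) :
    ∃ y : V, ∀ i, ⟪y, b i⟫ = c i := by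
  let f : V →L[ℝ] ℝ := LinearMap.toContinuousLinearMap (b.constr ℝ c)
  refine ⟨(InnerProductSpace.toDual ℝ V).symm f, fun i => ?_⟩
  rw [InnerProductSpace.toDual_symm_apply]
  simp [f]

/-- Every orbit meets the closed antidominant chamber: take the orbit point of largest pairing with
a strictly antidominant vector. -/
lemma exists_chamber (hb : RBase R b) (hfin : (WeylGrp R : Set (V ≃ₗᵢ[ℝ] V)).Finite) (x : V) :
    ∃ w ∈ WeylGrp R, ∀ i, ⟪w x, b i⟫ ≤ 0 := by
  obtain ⟨η, hη⟩ := exists_inner b (fun _ => -1)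
  obtain ⟨w, hw, hmax⟩ := hfin.toFinset.exists_max_image (fun w => ⟪η, w x⟫)
    ⟨1, by simp⟩
  rw [Set.Finite.mem_toFinset] at hw
  refine ⟨w, hw, fun i => ?_⟩
  have := hmax (sr (b i) * w) (by
    rw [Set.Finite.mem_toFinset]
    exact mul_mem (sr_mem R (hb.mem i)) hw)
  rw [isom_mul_apply, sr_apply, inner_sub_right, inner_smul_right, hη] at this
  by_contra h
  have : 0 < 2 * ⟪w x, b i⟫ / ⟪b i, b i⟫ :=
    div_pos (by linarith) (hb.inner_pos (hb.mem i))
  linarith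

end RBase

/-! ### Cones attached to a basis -/

section Cones

variable {n : ℕ}

/-- The cone `C_I` attached to the basis `b`, in coordinates. -/
def CC (b : Module.Basis (Fin n) ℝ V) (I : Finset (Fin n)) : Set V :=
  {x | ∀ i ∉ I, 0 ≤ b.repr x i}

/-- The polar of `C_I`: a face of the closed antidominant chamber of `b`. -/
def NN (b : Module.Basis (Fin n) ℝ V) (I : Finset (Fin n)) : Set V :=
  {y | ∀ i, ⟪y, b i⟫ ≤ 0 ∧ (i ∈ I → ⟪y, b i⟫ = 0)}

/-- Membership in the relative interior of the cone `NN b I`. -/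
def RelInt (b : Module.Basis (Fin n) ℝ V) (I : Finset (Fin n)) (y : V) : Prop :=
  ∀ i, ⟪y, b i⟫ ≤ 0 ∧ (i ∈ I ↔ ⟪y, b i⟫ = 0)

lemma RelInt.mem {b : Module.Basis (Fin n) ℝ V} {I : Finset (Fin n)} {y : V} (h : RelInt b I y) :
    y ∈ NN b I := fun i => ⟨(h i).1, (h i).2.1⟩

lemma exists_relInt (b : Module.Basis (Fin n) ℝ V) (I : Finset (Fin n)) : ∃ y, RelInt b I y := by
  classical
  obtain ⟨y, hy⟩ := RBase.exists_inner b (fun i => if i ∈ I then 0 else -1)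
  refine ⟨y, fun i => ?_⟩
  rw [hy]
  by_cases h : i ∈ I <;> simp [h]

lemma relInt_zeros (b : Module.Basis (Fin n) ℝ V) {y : V} (hy : ∀ i, ⟪y, b i⟫ ≤ 0) :
    RelInt b (Finset.univ.filter fun i => ⟪y, b i⟫ = 0) y := fun i => ⟨hy i, by simp⟩

lemma mem_CC_iff (b : Module.Basis (Fin n) ℝ V) (I : Finset (Fin n)) (x : V) :
    x ∈ CC b I ↔ ∀ y ∈ NN b I, ⟪y, x⟫ ≤ 0 := by
  classical
  constructor
  · intro hx y hy
    rw [RBase.inner_eq_sum b]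
    refine Finset.sum_nonpos fun i _ => ?_
    by_cases hi : i ∈ I
    · rw [(hy i).2 hi, mul_zero]
    · exact mul_nonpos_of_nonneg_of_nonpos (hx i hi) (hy i).1
  · intro h i hi
    obtain ⟨y, hy⟩ := RBase.exists_inner b (fun j => if j = i then -1 else 0)
    have := h y ?_
    · rw [RBase.inner_eq_sum b, Finset.sum_eq_single i] at this
      · rw [hy] at this
        simp only [if_true] at this
        linarith
      · intro j _ hj
        rw [hy, if_neg hj, mul_zero]
      · simp
    · intro j
      rw [hy]
      by_cases hj : j = i
      · subst hj
        simp [hi]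
      · simp [hj]

lemma repr_eq_zero_iff (b : Module.Basis (Fin n) ℝ V) (I : Finset (Fin n)) (x : V) :
    (∀ i ∉ I, b.repr x i = 0) ↔ ∀ y ∈ NN b I, ⟪y, x⟫ = 0 := by
  constructor
  · intro h y hy
    apply le_antisymm
    · exact (mem_CC_iff b I x).1 (fun i hi => (h i hi).ge) y hy
    · have := (mem_CC_iff b I (-x)).1 (fun i hi => by simp [h i hi]) y hy
      rw [inner_neg_right] at this
      linarith
  · intro h i hi
    apply le_antisymm
    · have := (mem_CC_iff b I (-x)).2 (fun y hy => by simp [h y hy]) i hi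
      simpa using this
    · exact (mem_CC_iff b I x).2 (fun y hy => (h y hy).le) i hi

lemma mem_span_iff (b : Module.Basis (Fin n) ℝ V) (I : Finset (Fin n)) (x : V) :
    x ∈ Submodule.span ℝ (b '' ↑I) ↔ ∀ i ∉ I, b.repr x i = 0 := by
  rw [b.mem_span_image]
  constructor
  · intro h i hi
    by_contra h0
    exact hi (h (Finsupp.mem_support_iff.2 h0))
  · intro h i hi
    by_contra h0
    exact (Finsupp.mem_support_iff.1 hi) (h i h0)

lemma isConvexCone_CC (b : Module.Basis (Fin n) ℝ V) (I : Finset (Fin n)) :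
    IsConvexCone (CC b I) := by
  refine ⟨fun i _ => by simp, ?_, ?_⟩
  · intro x hx y hy c d hc hd _ i hi
    simp only [map_add, map_smul, Finsupp.add_apply, Finsupp.smul_apply, smul_eq_mul]
    have := hx i hi
    have := hy i hi
    positivity
  · intro c hc x hx i hi
    have := hx i hi
    simp only [map_smul, Finsupp.smul_apply, smul_eq_mul]
    positivity

lemma IsConvexCone.add_mem {C : Set V} (hC : IsConvexCone C) {x y : V} (hx : x ∈ C) (hy : y ∈ C) :
    x + y ∈ C := by
  have hconv := hC.2.1
  have h := hconv (hC.2.2 2 (by norm_num) x hx) (hC.2.2 2 (by norm_num) y hy)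
    (by norm_num : (0 : ℝ) ≤ 1 / 2) (by norm_num : (0 : ℝ) ≤ 1 / 2) (by norm_num)
  convert h using 1
  rw [smul_smul, smul_smul]
  norm_num

lemma IsConvexCone.sum_mem {C : Set V} (hC : IsConvexCone C) {ι : Type*} (s : Finset ι) (f : ι → V)
    (hf : ∀ i ∈ s, f i ∈ C) : ∑ i ∈ s, f i ∈ C := by
  classical
  induction s using Finset.induction_on with
  | empty => simpa using hC.1
  | insert i s hi ih =>
    rw [Finset.sum_insert hi]
    exact hC.add_mem (hf i (by simp)) (ih fun j hj => hf j (by simp [hj]))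

lemma basis_mem_CC (b : Module.Basis (Fin n) ℝ V) (I : Finset (Fin n)) (i : Fin n) :
    b i ∈ CC b I := by
  intro j _
  rw [b.repr_self, Finsupp.single_apply]
  split_ifs <;> simp

lemma neg_basis_mem_CC (b : Module.Basis (Fin n) ℝ V) {I : Finset (Fin n)} {i : Fin n}
    (hi : i ∈ I) : -b i ∈ CC b I := by
  intro j hj
  rw [map_neg, b.repr_self, Finsupp.neg_apply, Finsupp.single_eq_of_ne (by rintro rfl; exact hj hi)]
  simp

lemma coneC_eq (b : Module.Basis (Fin n) ℝ V) (I : Finset (Fin n)) :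
    coneC (fun i => b i) I = CC b I := by
  apply Set.Subset.antisymm
  · apply Set.sInter_subset_of_mem
    refine ⟨isConvexCone_CC b I, ?_⟩
    rintro x (⟨i, rfl⟩ | ⟨i, hi, rfl⟩)
    · exact basis_mem_CC b I i
    · exact neg_basis_mem_CC b hi
  · rintro x hx C ⟨hC, hS⟩
    rw [← b.sum_repr x]
    apply hC.sum_mem
    intro i _
    have h1 : b i ∈ C := hS (Or.inl ⟨i, rfl⟩)
    rcases le_total 0 (b.repr x i) with h | h
    · exact hC.2.2 _ h _ h1
    · by_cases hi : i ∈ I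
      · have h2 : -b i ∈ C := hS (Or.inr ⟨i, hi, rfl⟩)
        have := hC.2.2 (-(b.repr x i)) (by linarith) _ h2
        simpa using this
      · rw [le_antisymm h (hx i hi), zero_smul]
        exact hC.1

lemma mem_transl {C : Set V} {v x : V} : x ∈ transl v C ↔ x - v ∈ C := by
  constructor
  · rintro ⟨y, hy, rfl⟩
    simpa using hy
  · intro h
    exact ⟨x - v, h, by simp⟩

lemma mem_lineal_CC (b : Module.Basis (Fin n) ℝ V) (I : Finset (Fin n)) (x : V) :
    x ∈ lineal (CC b I) ↔ ∀ i ∉ I, b.repr x i = 0 := by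
  constructor
  · rintro ⟨h1, h2⟩ i hi
    have h3 := h2 i hi
    rw [map_neg, Finsupp.neg_apply] at h3
    linarith [h1 i hi]
  · intro h
    exact ⟨fun i hi => (h i hi).ge, fun i hi => by simp [h i hi]⟩

lemma tight_iff (b : Module.Basis (Fin n) ℝ V) (I : Finset (Fin n)) (v : V) (P : Set V) :
    TightContains (CC b I) v P ↔
      (∀ x ∈ P, x - v ∈ CC b I) ∧ ∃ x ∈ P, ∀ y ∈ NN b I, ⟪y, x⟫ = ⟪y, v⟫ := by
  have h : ∀ x, x ∈ transl v (lineal (CC b I)) ↔ ∀ y ∈ NN b I, ⟪y, x⟫ = ⟪y, v⟫ := by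
    intro x
    rw [mem_transl, mem_lineal_CC, repr_eq_zero_iff]
    simp only [inner_sub_right, sub_eq_zero]
  unfold TightContains
  constructor
  · rintro ⟨h1, x, hx, hx'⟩
    exact ⟨fun x hx => mem_transl.1 (h1 hx), x, hx, (h x).1 hx'⟩
  · rintro ⟨h1, x, hx, hx'⟩
    exact ⟨fun x hx => mem_transl.2 (h1 x hx), x, hx, (h x).2 hx'⟩

lemma image_CC (b : Module.Basis (Fin n) ℝ V) (I : Finset (Fin n)) (w : V ≃ₗᵢ[ℝ] V) :
    w '' CC b I = CC (b.map w.toLinearEquiv) I := by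
  ext x
  constructor
  · rintro ⟨y, hy, rfl⟩ i hi
    simpa using hy i hi
  · intro h
    exact ⟨w.symm x, fun i hi => by simpa using h i hi, by simp⟩

lemma isClosed_NN (b : Module.Basis (Fin n) ℝ V) (I : Finset (Fin n)) : IsClosed (NN b I) := by
  have : NN b I = ⋂ i, ({y | ⟪y, b i⟫ ≤ 0} ∩ {y | i ∈ I → ⟪y, b i⟫ = 0}) := by
    ext y
    simp [NN]
  rw [this]
  refine isClosed_iInter fun i => (isClosed_le (by fun_prop) continuous_const).inter ?_
  by_cases hi : i ∈ I
  · simp only [hi, true_imp_iff]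
    exact isClosed_eq (by fun_prop) continuous_const
  · simp [hi]

lemma isConvexCone_NN (b : Module.Basis (Fin n) ℝ V) (I : Finset (Fin n)) :
    IsConvexCone (NN b I) := by
  refine ⟨fun i => by simp, ?_, ?_⟩
  · intro x hx y hy c d hc hd _ i
    simp only [inner_add_left, real_inner_smul_left]
    refine ⟨?_, fun hi => by rw [(hx i).2 hi, (hy i).2 hi]; ring⟩
    have := mul_nonpos_of_nonneg_of_nonpos hc (hx i).1
    have := mul_nonpos_of_nonneg_of_nonpos hd (hy i).1
    linarith
  · intro c hc x hx i
    simp only [real_inner_smul_left]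
    exact ⟨mul_nonpos_of_nonneg_of_nonpos hc (hx i).1, fun hi => by rw [(hx i).2 hi, mul_zero]⟩

lemma NN_anti (b : Module.Basis (Fin n) ℝ V) {I J : Finset (Fin n)} (h : I ⊆ J) :
    NN b J ⊆ NN b I := fun _ hy i => ⟨(hy i).1, fun hi => (hy i).2 (h hi)⟩

end Cones

/-! ### Extended deformations of the permutohedron -/

/-- `b` is a base of `R`, and `Pi` is a permutohedron of `R`, written as the hull of the orbit of
its strictly antidominant vertex. -/
structure PSetup (R : Finset V) (Pi : Set V) {n : ℕ} (b : Module.Basis (Fin n) ℝ V) : Prop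
    extends RBase R b where
  orbit : ∃ p, (∀ i, ⟪p, b i⟫ < 0) ∧ Pi = convexHull ℝ {x | ∃ w ∈ WeylGrp R, x = w p}

namespace PSetup

variable {R : Finset V} {Pi : Set V} {n : ℕ} {b : Module.Basis (Fin n) ℝ V}

lemma map (hb : PSetup R Pi b) {w : V ≃ₗᵢ[ℝ] V} (hw : w ∈ WeylGrp R) :
    PSetup R Pi (b.map w.toLinearEquiv) where
  toRBase := hb.toRBase.map hw
  orbit := by
    obtain ⟨p, hp, hPi⟩ := hb.orbit
    refine ⟨w p, fun i => ?_, ?_⟩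
    · have := hp i
      rw [← w.inner_map_map] at this
      exact this
    · rw [hPi]
      congr 1
      ext x
      constructor
      · rintro ⟨u, hu, rfl⟩
        refine ⟨u * w⁻¹, mul_mem hu (inv_mem hw), ?_⟩
        rw [← isom_mul_apply, inv_mul_cancel_right]
      · rintro ⟨u, hu, rfl⟩
        exact ⟨u * w, mul_mem hu hw, rfl⟩

/-- The vertices `p` and `sr (b i) p` of the permutohedron, and its position relative to `p`. -/
lemma exists_vertex (hb : PSetup R Pi b) :
    ∃ p ∈ Pi, (∀ q ∈ Pi, q - p ∈ CC b ∅) ∧ ∀ i, ∃ c : ℝ, 0 < c ∧ p + c • b i ∈ Pi := by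
  obtain ⟨p, hp, rfl⟩ := hb.orbit
  have hsub := subset_convexHull ℝ {x | ∃ w ∈ WeylGrp R, x = w p}
  refine ⟨p, hsub ⟨1, one_mem _, rfl⟩, ?_, fun i => ?_⟩
  · intro q hq
    have hmin : convexHull ℝ {x | ∃ w ∈ WeylGrp R, x = w p} ⊆ {q | q - p ∈ CC b ∅} := by
      refine convexHull_min ?_ ?_
      · rintro x ⟨w, hw, rfl⟩ i _
        exact hb.orbit_sub_nonneg (fun i => (hp i).le) hw i
      · have := ((isConvexCone_CC b ∅).2.1).translate_preimage_left (-p)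
        convert this using 1
        ext x
        simp [sub_eq_neg_add, add_comm]
    exact hmin hq
  · have := hb.inner_pos (hb.mem i)
    refine ⟨-((2 * ⟪p, b i⟫) / ⟪b i, b i⟫), ?_, hsub ⟨sr (b i), sr_mem R (hb.mem i), ?_⟩⟩
    · rw [← neg_div]
      exact div_pos (by linarith [hp i]) this
    · rw [sr_apply]
      module

/-- A point of the permutohedron maximizing one functional in the relative interior of `NN b I`
maximizes all functionals in `NN b I`. -/
lemma max_of_relInt (hb : PSetup R Pi b) {I : Finset (Fin n)} {y : V} (hy : RelInt b I y)
    {x : V} (hx : x ∈ Pi) (hmax : ∀ q ∈ Pi, ⟪y, q⟫ ≤ ⟪y, x⟫) {y' : V} (hy' : y' ∈ NN b I) :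
    ∀ q ∈ Pi, ⟪y', q⟫ ≤ ⟪y', x⟫ := by
  obtain ⟨p, hp, hcone, -⟩ := hb.exists_vertex
  have h1 : ∀ i, b.repr (x - p) i * ⟪y, b i⟫ = 0 := by
    have hn : ∀ i ∈ Finset.univ, b.repr (x - p) i * ⟪y, b i⟫ ≤ 0 := fun i _ =>
      mul_nonpos_of_nonneg_of_nonpos (hcone x hx i (by simp)) (hy i).1
    have hs : ∑ i, b.repr (x - p) i * ⟪y, b i⟫ = 0 := by
      apply le_antisymm (Finset.sum_nonpos hn)
      rw [← RBase.inner_eq_sum, inner_sub_right]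
      linarith [hmax p hp]
    intro i
    exact (Finset.sum_eq_zero_iff_of_nonpos hn).1 hs i (Finset.mem_univ i)
  have h2 : ⟪y', x - p⟫ = 0 := by
    rw [RBase.inner_eq_sum b]
    refine Finset.sum_eq_zero fun i _ => ?_
    rcases mul_eq_zero.1 (h1 i) with h | h
    · rw [h, zero_mul]
    · rw [(hy' i).2 ((hy i).2.2 h), mul_zero]
  intro q hq
  have h3 := (mem_CC_iff b ∅ (q - p)).1 (hcone q hq) y' (NN_anti b (Finset.empty_subset I) hy')
  rw [inner_sub_right] at h2 h3
  linarith

lemma max_of_relInt_extDef (hb : PSetup R Pi b) {P : Set V} (hP : IsExtDef Pi P)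
    {I : Finset (Fin n)} {y : V} (hy : RelInt b I y)
    {v : V} (hv : v ∈ P) (hmax : ∀ q ∈ P, ⟪y, q⟫ ≤ ⟪y, v⟫) {y' : V} (hy' : y' ∈ NN b I) :
    ∀ q ∈ P, ⟪y', q⟫ ≤ ⟪y', v⟫ := by
  obtain ⟨𝒢, h𝒢, he⟩ := hP.2 {x | x ∈ P ∧ ∀ q ∈ P, ⟪y, q⟫ ≤ ⟪y, x⟫} ⟨y, ⟨v, hv, hmax⟩, rfl⟩
  have hyN : y ∈ normCone P {x | x ∈ P ∧ ∀ q ∈ P, ⟪y, q⟫ ≤ ⟪y, x⟫} :=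
    fun x hx q hq => hx.2 q hq
  rw [he] at hyN
  simp only [Set.mem_iUnion] at hyN
  obtain ⟨G, hG, hyG⟩ := hyN
  have hy'N : y' ∈ normCone P {x | x ∈ P ∧ ∀ q ∈ P, ⟪y, q⟫ ≤ ⟪y, x⟫} := by
    rw [he]
    simp only [Set.mem_iUnion]
    refine ⟨G, hG, fun x hx => ?_⟩
    obtain ⟨y₀, -, hGe⟩ := h𝒢 G hG
    have hxPi : x ∈ Pi := by
      rw [hGe] at hx
      exact hx.1
    exact hb.max_of_relInt hy hxPi (hyG x hx) hy'
  exact hy'N v ⟨hv, hmax⟩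

/-- The normal cone of `Pi` at the face selected by `y` in the relative interior of `NN b I`. -/
lemma normCone_face (hb : PSetup R Pi b) {I : Finset (Fin n)} {y : V} (hy : RelInt b I y) :
    ∃ G, IsFace Pi G ∧ normCone Pi G = NN b I := by
  obtain ⟨p, hp, hcone, hs⟩ := hb.exists_vertex
  have hle : ∀ y' ∈ NN b I, ∀ q ∈ Pi, ⟪y', q⟫ ≤ ⟪y', p⟫ := by
    intro y' hy' q hq
    have := (mem_CC_iff b ∅ (q - p)).1 (hcone q hq) y' (NN_anti b (Finset.empty_subset I) hy')
    rw [inner_sub_right] at this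
    linarith
  refine ⟨{x | x ∈ Pi ∧ ∀ q ∈ Pi, ⟪y, q⟫ ≤ ⟪y, x⟫}, ⟨y, ⟨p, hp, hle y hy.mem⟩, rfl⟩, ?_⟩
  apply Set.Subset.antisymm
  · intro y' hy' i
    obtain ⟨c, hc, hq⟩ := hs i
    have h1 := hy' p ⟨hp, hle y hy.mem⟩ _ hq
    rw [inner_add_right, inner_smul_right] at h1
    have h2 : ⟪y', b i⟫ ≤ 0 := by
      by_contra h
      have := mul_pos hc (not_le.1 h)
      linarith
    refine ⟨h2, fun hi => ?_⟩
    have h3 := hy' (p + c • b i) ⟨hq, fun q hq => ?_⟩ p hp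
    · rw [inner_add_right, inner_smul_right] at h3
      apply le_antisymm h2
      by_contra h
      have := mul_neg_of_pos_of_neg hc (not_le.1 h)
      linarith
    · rw [inner_add_right, inner_smul_right, (hy i).2.1 hi, mul_zero, add_zero]
      exact hle y hy.mem q hq
  · intro y' hy' x hx q hq
    exact hb.max_of_relInt hy hx.1 hx.2 hy' q hq

lemma isPolyhedron_CC (b : Module.Basis (Fin n) ℝ V) (J : Finset (Fin n)) (u : V) :
    IsPolyhedron (transl u (CC b J)) := by
  classical
  refine ⟨⟨u, mem_transl.2 (by simpa using (isConvexCone_CC b J).1)⟩, ?_⟩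
  choose ω hω using fun i : Fin n => RBase.exists_inner b (fun j => if j = i then -1 else 0)
  have hr : ∀ i x, ⟪ω i, x⟫ = -b.repr x i := by
    intro i x
    rw [RBase.inner_eq_sum b, Finset.sum_eq_single i]
    · rw [hω]; simp
    · intro j _ hj
      rw [hω, if_neg hj, mul_zero]
    · simp
  refine ⟨Jᶜ.image fun i => (ω i, ⟪ω i, u⟫), ?_⟩
  ext x
  rw [mem_transl]
  simp only [Finset.mem_image, Finset.mem_compl, Set.mem_ofPred_eq, forall_exists_index, and_imp,
    forall_apply_eq_imp_iff₂, CC, hr, map_sub, Finsupp.sub_apply]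
  refine forall₂_congr fun i _ => ?_
  constructor <;> intro h <;> linarith

/-- The translates of the cones `C_J` are extended deformations. -/
lemma isExtDef_CC (hb : PSetup R Pi b) (J : Finset (Fin n)) (u : V) :
    IsExtDef Pi (transl u (CC b J)) := by
  refine ⟨isPolyhedron_CC b J u, ?_⟩
  rintro F ⟨y, ⟨x₀, hx₀⟩, rfl⟩
  have hC := isConvexCone_CC b J
  have mem_add : ∀ x ∈ transl u (CC b J), ∀ d ∈ CC b J, x + d ∈ transl u (CC b J) := by
    intro x hx d hd
    rw [mem_transl] at hx ⊢
    rw [add_sub_right_comm]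
    exact hC.add_mem hx hd
  have hu : u ∈ transl u (CC b J) := mem_transl.2 (by simpa using hC.1)
  have hyJ : y ∈ NN b J := by
    have hd : ∀ d ∈ CC b J, ⟪y, d⟫ ≤ 0 := by
      intro d hd
      have := hx₀.2 _ (mem_add x₀ hx₀.1 d hd)
      rw [inner_add_right] at this
      linarith
    intro i
    have h1 := hd _ (basis_mem_CC b J i)
    refine ⟨h1, fun hi => ?_⟩
    have h2 := hd _ (neg_basis_mem_CC b hi)
    rw [inner_neg_right] at h2
    linarith
  have hyI := relInt_zeros b (fun i => (hyJ i).1)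
  set I := Finset.univ.filter fun i => ⟪y, b i⟫ = 0 with hI
  have hJI : J ⊆ I := fun i hi => (hyI i).2.2 ((hyJ i).2 hi)
  obtain ⟨G, hG, hGe⟩ := hb.normCone_face hyI
  refine ⟨{G}, by simpa using hG, ?_⟩
  simp only [Set.mem_singleton_iff, Set.iUnion_iUnion_eq_left, hGe]
  have humax : ∀ y' ∈ NN b J, ∀ q ∈ transl u (CC b J), ⟪y', q⟫ ≤ ⟪y', u⟫ := by
    intro y' hy' q hq
    have := (mem_CC_iff b J _).1 (mem_transl.1 hq) y' hy'
    rw [inner_sub_right] at this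
    linarith
  apply Set.Subset.antisymm
  · intro y' hy' i
    have h1 := hy' u ⟨hu, humax y hyJ⟩ _ (mem_add u hu _ (basis_mem_CC b J i))
    rw [inner_add_right] at h1
    refine ⟨by linarith, fun hi => ?_⟩
    have h2 := hy' (u + b i) ⟨mem_add u hu _ (basis_mem_CC b J i), fun q hq => ?_⟩ u hu
    · rw [inner_add_right] at h2
      linarith
    · rw [inner_add_right, (hyI i).2.1 hi, add_zero]
      exact humax y hyJ q hq
  · intro y' hy' v hv q hq
    have h1 := humax y' (NN_anti b hJI hy') q hq
    have h2 : ⟪y', v - u⟫ = 0 := by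
      have hvu := mem_transl.1 hv.1
      have hn : ∀ i ∈ Finset.univ, b.repr (v - u) i * ⟪y, b i⟫ ≤ 0 := fun i _ => by
        by_cases hi : i ∈ J
        · rw [(hyJ i).2 hi, mul_zero]
        · exact mul_nonpos_of_nonneg_of_nonpos (hvu i hi) (hyJ i).1
      have hs : ∑ i, b.repr (v - u) i * ⟪y, b i⟫ = 0 := by
        apply le_antisymm (Finset.sum_nonpos hn)
        rw [← RBase.inner_eq_sum, inner_sub_right]
        linarith [hv.2 u hu]
      rw [RBase.inner_eq_sum b]
      refine Finset.sum_eq_zero fun i _ => ?_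
      rcases mul_eq_zero.1 ((Finset.sum_eq_zero_iff_of_nonpos hn).1 hs i (Finset.mem_univ i))
        with h | h
      · rw [h, zero_mul]
      · rw [(hy' i).2 ((hyI i).2.2 h), mul_zero]
    rw [inner_sub_right] at h2
    linarith

end PSetup

lemma IsPolyhedron.isClosed {P : Set V} (hP : IsPolyhedron P) : IsClosed P := by
  obtain ⟨-, s, rfl⟩ := hP
  simp only [Set.ofPred_forall]
  exact isClosed_iInter fun p => isClosed_iInter fun _ =>
    isClosed_le (by fun_prop) continuous_const

lemma IsPolyhedron.convex {P : Set V} (hP : IsPolyhedron P) : Convex ℝ P := by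
  obtain ⟨-, s, rfl⟩ := hP
  intro x hx y hy c d hc hd hcd p hp
  rw [inner_add_right, inner_smul_right, inner_smul_right]
  calc c * ⟪p.1, x⟫ + d * ⟪p.1, y⟫ ≤ c * p.2 + d * p.2 := by
        gcongr
        · exact hx p hp
        · exact hy p hp
    _ = p.2 := by rw [← add_mul, hcd, one_mul]

/-! ### Tight containment is valuative -/

namespace PSetup

variable {R : Finset V} {Pi : Set V} {n : ℕ} {b : Module.Basis (Fin n) ℝ V}

/-- On extended deformations, tight containment in `C_I + v` says that `P` meets the affine space
`lineal C_I + v` and misses an open half-space with that affine space in its boundary. -/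
lemma tight_iff_meets (hb : PSetup R Pi b) {I : Finset (Fin n)} {y : V} (hy : RelInt b I y) (v : V)
    {P : Set V} (hP : IsExtDef Pi P) :
    TightContains (CC b I) v P ↔
      (∃ x ∈ P, ∀ i ∉ I, b.repr (x - v) i = 0) ∧ ¬∃ x ∈ P, 0 < ⟪y, x - v⟫ := by
  rw [tight_iff]
  constructor
  · rintro ⟨h1, x, hx, hxv⟩
    refine ⟨⟨x, hx, ?_⟩, ?_⟩
    · rw [repr_eq_zero_iff]
      intro y' hy'
      rw [inner_sub_right, hxv y' hy', sub_self]
    · rintro ⟨x', hx', hlt⟩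
      exact absurd hlt (not_lt.2 ((mem_CC_iff b I _).1 (h1 x' hx') y hy.mem))
  · rintro ⟨⟨x, hx, hxv⟩, h2⟩
    rw [repr_eq_zero_iff] at hxv
    have hxv' : ∀ y' ∈ NN b I, ⟪y', x⟫ = ⟪y', v⟫ := fun y' hy' => by
      have := hxv y' hy'
      rwa [inner_sub_right, sub_eq_zero] at this
    refine ⟨fun q hq => ?_, x, hx, hxv'⟩
    rw [mem_CC_iff]
    intro y' hy'
    rw [inner_sub_right, ← hxv' y' hy']
    have := hb.max_of_relInt_extDef hP hy hx (fun q hq => ?_) hy' q hq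
    · linarith
    · rw [hxv' y hy.mem]
      by_contra h
      exact h2 ⟨q, hq, by rw [inner_sub_right]; linarith⟩

lemma tight_valuative (hb : PSetup R Pi b) (I : Finset (Fin n)) (v : V) {k : ℕ} (a : Fin k → ℤ)
    (P : Fin k → Set V) (hP : ∀ i, IsExtDef Pi (P i)) (h : (∑ i, a i • indic (P i)) = 0) :
    ∑ i, a i * iv (TightContains (CC b I) v (P i)) = 0 := by
  obtain ⟨y, hy⟩ := exists_relInt b I
  have hpt := relation_pointwise h
  have hcl : ∀ i ∈ Finset.univ, IsClosed (P i) := fun i _ => (hP i).1.isClosed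
  have hcv : ∀ i ∈ Finset.univ, Convex ℝ (P i) := fun i _ => (hP i).1.convex
  have crepr : ∀ j, Continuous fun x => b.repr x j := fun j =>
    LinearMap.continuous_of_finiteDimensional (b.coord j)
  -- The open half-space is the increasing union of these closed half-spaces.
  have e1 := euler_meets Finset.univ a P hcl hcv hpt
    (fun m : ℕ => {x | 1 ≤ (m : ℝ) * ⟪y, x - v⟫}) ?_ ?_ ?_
  · -- Adjoining the affine space `lineal C_I + v` keeps the half-space such an increasing union.
    have e2 := euler_meets Finset.univ a P hcl hcv hpt
      (fun m : ℕ => {x | ∀ i, i ∉ I → |b.repr (x - v) i| ≤ (m : ℝ) * ⟪y, x - v⟫} ∩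
        {x | 0 ≤ ⟪y, x - v⟫}) ?_ ?_ ?_
    · have e3 := congrArg₂ (· - ·) e2 e1
      simp only [sub_self, ← Finset.sum_sub_distrib, ← mul_sub] at e3
      rw [← e3]
      refine Finset.sum_congr rfl fun i _ => ?_
      congr 1
      rw [iv_congr (hb.tight_iff_meets hy v (hP i))]
      have hK1 : (∃ x ∈ P i, ∃ m : ℕ, x ∈ {x | 1 ≤ (m : ℝ) * ⟪y, x - v⟫}) ↔
          ∃ x ∈ P i, 0 < ⟪y, x - v⟫ := by
        refine exists_congr fun x => and_congr_right fun _ => ?_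
        constructor
        · rintro ⟨m, hm⟩
          by_contra hle
          have : (m : ℝ) * ⟪y, x - v⟫ ≤ 0 :=
            mul_nonpos_of_nonneg_of_nonpos (Nat.cast_nonneg m) (not_lt.1 hle)
          have hm' : 1 ≤ (m : ℝ) * ⟪y, x - v⟫ := hm
          linarith
        · intro hlt
          obtain ⟨m, hm⟩ := exists_nat_ge (1 / ⟪y, x - v⟫)
          exact ⟨m, (div_le_iff₀ hlt).1 hm⟩
      have hK0 : (∃ x ∈ P i, ∃ m : ℕ,
          x ∈ {x | ∀ i, i ∉ I → |b.repr (x - v) i| ≤ (m : ℝ) * ⟪y, x - v⟫} ∩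
            {x | 0 ≤ ⟪y, x - v⟫}) ↔
          (∃ x ∈ P i, ∀ i ∉ I, b.repr (x - v) i = 0) ∨ ∃ x ∈ P i, 0 < ⟪y, x - v⟫ := by
        rw [← exists_or]
        refine exists_congr fun x => ?_
        rw [← and_or_left]
        refine and_congr_right fun _ => ?_
        constructor
        · rintro ⟨m, hm, hm0⟩
          have hm1 : 0 ≤ ⟪y, x - v⟫ := hm0
          rcases hm1.lt_or_eq with h0 | h0
          · exact Or.inr h0
          · left
            intro j hj
            have := hm j hj
            rw [← h0, mul_zero] at this
            exact abs_eq_zero.1 (le_antisymm this (abs_nonneg _))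
        · rintro (h0 | h0)
          · refine ⟨0, fun j hj => ?_, ?_⟩
            · rw [h0 j hj]
              simp
            · exact ((repr_eq_zero_iff b I _).1 h0 y hy.mem).ge
          · obtain ⟨m, hm⟩ := exists_nat_ge ((∑ j, |b.repr (x - v) j|) / ⟪y, x - v⟫)
            refine ⟨m, fun j _ => ?_, h0.le⟩
            refine le_trans ?_ ((div_le_iff₀ h0).1 hm)
            exact Finset.single_le_sum (f := fun j => |b.repr (x - v) j|)
              (fun j _ => abs_nonneg _) (Finset.mem_univ j)
      rw [iv_congr hK0, iv_congr hK1]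
      generalize (∃ x ∈ P i, ∀ i ∉ I, b.repr (x - v) i = 0) = A
      generalize (∃ x ∈ P i, 0 < ⟪y, x - v⟫) = B
      by_cases h1 : B <;> by_cases h2 : A <;> simp [iv, h1, h2]
    · intro m m' hmm x hx
      refine ⟨fun j hj => (hx.1 j hj).trans ?_, hx.2⟩
      have h0 : 0 ≤ ⟪y, x - v⟫ := hx.2
      gcongr
    · intro m
      refine IsClosed.inter ?_ (isClosed_le continuous_const (by fun_prop))
      simp only [Set.ofPred_forall]
      refine isClosed_iInter fun j => isClosed_iInter fun _ => ?_
      refine isClosed_le (continuous_abs.comp ((crepr j).comp (by fun_prop))) (by fun_prop)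
    · intro m x hx x' hx' c d hc hd hcd
      have he : c • x + d • x' - v = c • (x - v) + d • (x' - v) := by
        rw [smul_sub, smul_sub]
        nth_rw 1 [← one_smul ℝ v, ← hcd]
        module
      refine ⟨fun j hj => ?_, ?_⟩
      · rw [he]
        simp only [map_add, map_smul, Finsupp.add_apply, Finsupp.smul_apply, smul_eq_mul,
          inner_add_right, inner_smul_right]
        refine (abs_add_le _ _).trans ?_
        rw [abs_mul, abs_mul, abs_of_nonneg hc, abs_of_nonneg hd]
        have h1 := mul_le_mul_of_nonneg_left (hx.1 j hj) hc
        have h2 := mul_le_mul_of_nonneg_left (hx'.1 j hj) hd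
        nlinarith
      · change 0 ≤ ⟪y, c • x + d • x' - v⟫
        rw [he, inner_add_right, inner_smul_right, inner_smul_right]
        have h1 : 0 ≤ ⟪y, x - v⟫ := hx.2
        have h2 : 0 ≤ ⟪y, x' - v⟫ := hx'.2
        positivity
  · intro m m' hmm x hx
    have h1 : 1 ≤ (m : ℝ) * ⟪y, x - v⟫ := hx
    change 1 ≤ (m' : ℝ) * ⟪y, x - v⟫
    have h0 : 0 ≤ ⟪y, x - v⟫ := by
      by_contra hlt
      have := mul_nonpos_of_nonneg_of_nonpos (Nat.cast_nonneg (α := ℝ) m) (not_le.1 hlt).le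
      linarith
    refine h1.trans ?_
    gcongr
  · intro m
    exact isClosed_le continuous_const (by fun_prop)
  · intro m x hx x' hx' c d hc hd hcd
    have h1 : 1 ≤ (m : ℝ) * ⟪y, x - v⟫ := hx
    have h2 : 1 ≤ (m : ℝ) * ⟪y, x' - v⟫ := hx'
    change 1 ≤ (m : ℝ) * ⟪y, c • x + d • x' - v⟫
    have he : c • x + d • x' - v = c • (x - v) + d • (x' - v) := by
      rw [smul_sub, smul_sub]
      nth_rw 1 [← one_smul ℝ v, ← hcd]
      module
    rw [he, inner_add_right, inner_smul_right, inner_smul_right]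
    have := mul_le_mul_of_nonneg_left h1 hc
    have := mul_le_mul_of_nonneg_left h2 hd
    nlinarith

end PSetup

/-! ### The cone of directions bounded on an extended deformation -/

/-- The set of linear functionals that attain a maximum on `P` (the support of the normal fan). -/
def BB (P : Set V) : Set V := {y | ∃ v ∈ P, ∀ q ∈ P, ⟪y, q⟫ ≤ ⟪y, v⟫}

/-- Some point of `P` maximizes all functionals in `NN b I` simultaneously. -/
def Att {n : ℕ} (b : Module.Basis (Fin n) ℝ V) (I : Finset (Fin n)) (P : Set V) : Prop :=
  ∃ v ∈ P, ∀ y ∈ NN b I, ∀ q ∈ P, ⟪y, q⟫ ≤ ⟪y, v⟫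

lemma exists_proj {P : Set V} (hne : P.Nonempty) (hc : IsClosed P) (hv : Convex ℝ P) (x : V) :
    ∃ v ∈ P, ∀ q ∈ P, ⟪x - v, q - v⟫ ≤ 0 := by
  obtain ⟨v, hvP, h⟩ := exists_norm_eq_iInf_of_complete_convex hne hc.isComplete hv x
  exact ⟨v, hvP, (norm_eq_iInf_iff_real_inner_le_zero hv hvP).1 h⟩

lemma smul_mem_BB {P : Set V} {y : V} (hy : y ∈ BB P) {c : ℝ} (hc : 0 ≤ c) : c • y ∈ BB P := by
  obtain ⟨v, hv, h⟩ := hy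
  refine ⟨v, hv, fun q hq => ?_⟩
  rw [real_inner_smul_left, real_inner_smul_left]
  exact mul_le_mul_of_nonneg_left (h q hq) hc

namespace PSetup

variable {R : Finset V} {Pi : Set V} {n : ℕ} {b : Module.Basis (Fin n) ℝ V} {P : Set V}

lemma att_of_relInt (hb : PSetup R Pi b) (hP : IsExtDef Pi P) {y : V} (hy : y ∈ BB P)
    {I : Finset (Fin n)} (hI : RelInt b I y) : Att b I P := by
  obtain ⟨v, hv, h⟩ := hy
  exact ⟨v, hv, fun y' hy' => hb.max_of_relInt_extDef hP hI hv h hy'⟩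

lemma mem_BB_iff (hb : PSetup R Pi b) (hfin : (WeylGrp R : Set (V ≃ₗᵢ[ℝ] V)).Finite)
    (hP : IsExtDef Pi P) (y : V) :
    y ∈ BB P ↔ ∃ w ∈ (WeylGrp R : Set (V ≃ₗᵢ[ℝ] V)), ∃ I, Att (b.map w.toLinearEquiv) I P ∧
      y ∈ NN (b.map w.toLinearEquiv) I := by
  constructor
  · intro hy
    obtain ⟨w, hw, h⟩ := hb.toRBase.exists_chamber hfin y
    have h' : ∀ i, ⟪y, (b.map (w⁻¹).toLinearEquiv) i⟫ ≤ 0 := by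
      intro i
      have := h i
      rw [← LinearIsometryEquiv.inner_map_map w⁻¹] at this
      simpa using this
    have hr := relInt_zeros _ h'
    exact ⟨w⁻¹, inv_mem hw, _, (hb.map (inv_mem hw)).att_of_relInt hP hy hr, hr.mem⟩
  · rintro ⟨w, -, I, ⟨v, hv, h⟩, hy⟩
    exact ⟨v, hv, h y hy⟩

lemma isClosed_BB (hb : PSetup R Pi b) (hfin : (WeylGrp R : Set (V ≃ₗᵢ[ℝ] V)).Finite)
    (hP : IsExtDef Pi P) : IsClosed (BB P) := by
  have : BB P = ⋃ w ∈ (WeylGrp R : Set (V ≃ₗᵢ[ℝ] V)), ⋃ I : Finset (Fin n),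
      {y | Att (b.map w.toLinearEquiv) I P ∧ y ∈ NN (b.map w.toLinearEquiv) I} := by
    ext y
    rw [hb.mem_BB_iff hfin hP]
    simp
  rw [this]
  refine hfin.isClosed_biUnion fun w _ => isClosed_iUnion_of_finite fun I => ?_
  by_cases h : Att (b.map w.toLinearEquiv) I P
  · simpa [h] using isClosed_NN (b.map w.toLinearEquiv) I
  · simp [h]

/-- A functional bounded above on `P` attains its maximum: it is the limit, as `t → ∞`, of the
directions `y - v / t` with `v` the point of `P` nearest to `t • y`, and `BB P` is closed. -/
lemma mem_BB_of_bounded (hb : PSetup R Pi b) (hfin : (WeylGrp R : Set (V ≃ₗᵢ[ℝ] V)).Finite)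
    (hP : IsExtDef Pi P) {y : V} {M : ℝ} (hM : ∀ q ∈ P, ⟪y, q⟫ ≤ M) : y ∈ BB P := by
  rw [← (hb.isClosed_BB hfin hP).closure_eq, Metric.mem_closure_iff]
  intro δ hδ
  obtain ⟨p₀, hp₀⟩ := hP.1.1
  set D := 2 * (M - ⟪y, p₀⟫) + ‖p₀‖ ^ 2 with hD
  obtain ⟨t, ht⟩ := exists_gt (max 1 (D / δ ^ 2))
  have ht1 : 1 < t := (le_max_left _ _).trans_lt ht
  have htD : D / δ ^ 2 < t := (le_max_right _ _).trans_lt ht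
  have ht0 : 0 < t := by linarith
  obtain ⟨v, hv, hvq⟩ := exists_proj hP.1.1 hP.1.isClosed hP.1.convex (t • y)
  have hB : t • y - v ∈ BB P := ⟨v, hv, fun q hq => by
    have := hvq q hq
    rw [inner_sub_right] at this
    linarith⟩
  refine ⟨t⁻¹ • (t • y - v), smul_mem_BB hB (by positivity), ?_⟩
  have he : y - t⁻¹ • (t • y - v) = t⁻¹ • v := by
    rw [smul_sub, smul_smul, inv_mul_cancel₀ ht0.ne', one_smul]
    abel
  rw [dist_eq_norm, he, norm_smul, Real.norm_of_nonneg (by positivity : 0 ≤ t⁻¹)]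
  have h1 := hvq p₀ hp₀
  rw [inner_sub_left, inner_sub_right, inner_sub_right, real_inner_smul_left, real_inner_smul_left,
    real_inner_self_eq_norm_sq] at h1
  have h2 := hM v hv
  have h3 := real_inner_le_norm v p₀
  have h4 : ‖v‖ ^ 2 ≤ 2 * t * (M - ⟪y, p₀⟫) + ‖p₀‖ ^ 2 := by
    nlinarith [sq_nonneg (‖v‖ - ‖p₀‖), mul_le_mul_of_nonneg_left h2 ht0.le]
  have h5 : ‖v‖ ^ 2 ≤ t * D := by
    rw [hD]
    nlinarith [sq_nonneg ‖p₀‖]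
  have h6 : D < t * δ ^ 2 := by
    rwa [div_lt_iff₀ (by positivity)] at htD
  have h7 : ‖v‖ ^ 2 < (t * δ) ^ 2 := by nlinarith
  have h8 : ‖v‖ < t * δ := lt_of_pow_lt_pow_left₀ 2 (by positivity) h7
  rwa [inv_mul_lt_iff₀ ht0]

lemma add_mem_BB (hb : PSetup R Pi b) (hfin : (WeylGrp R : Set (V ≃ₗᵢ[ℝ] V)).Finite)
    (hP : IsExtDef Pi P) {y y' : V} (hy : y ∈ BB P) (hy' : y' ∈ BB P) : y + y' ∈ BB P := by
  obtain ⟨v, hv, h⟩ := hy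
  obtain ⟨v', hv', h'⟩ := hy'
  refine hb.mem_BB_of_bounded hfin hP (M := ⟪y, v⟫ + ⟪y', v'⟫) fun q hq => ?_
  rw [inner_add_left]
  exact add_le_add (h q hq) (h' q hq)

lemma zero_mem_BB (hP : IsExtDef Pi P) : (0 : V) ∈ BB P := by
  obtain ⟨p₀, hp₀⟩ := hP.1.1
  exact ⟨p₀, hp₀, by simp⟩

/-- The cone `BB P` cuts each face of the chamber in another face of the chamber. -/
lemma exists_restrict (hb : PSetup R Pi b) (hfin : (WeylGrp R : Set (V ≃ₗᵢ[ℝ] V)).Finite)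
    (hP : IsExtDef Pi P) (I : Finset (Fin n)) :
    ∃ J, Att b J P ∧ ∀ y, (y ∈ NN b I ∧ y ∈ BB P) ↔ y ∈ NN b J := by
  classical
  let Z : V → Finset (Fin n) := fun y => Finset.univ.filter fun i => ⟪y, b i⟫ = 0
  have hex : ∃ k, ∃ y, (y ∈ NN b I ∧ y ∈ BB P) ∧ (Z y).card = k :=
    ⟨_, 0, ⟨(isConvexCone_NN b I).1, zero_mem_BB hP⟩, rfl⟩
  -- An element of the intersection with as few zeros as possible is in its relative interior.
  obtain ⟨y₀, ⟨hy₀I, hy₀B⟩, hcard⟩ := Nat.find_spec hex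
  have hmin : ∀ y, y ∈ NN b I → y ∈ BB P → (Z y₀).card ≤ (Z y).card := fun y h1 h2 => by
    rw [hcard]
    exact Nat.find_min' hex ⟨y, ⟨h1, h2⟩, rfl⟩
  have hrel : RelInt b (Z y₀) y₀ := relInt_zeros b fun i => (hy₀I i).1
  have hatt := hb.att_of_relInt hP hy₀B hrel
  refine ⟨Z y₀, hatt, fun y => ⟨?_, fun hy => ⟨?_, ?_⟩⟩⟩
  · rintro ⟨hyI, hyB⟩
    have hsub : Z (y + y₀) ⊆ Z y₀ := by
      intro i hi
      have hi' := (Finset.mem_filter.1 hi).2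
      rw [inner_add_left] at hi'
      refine Finset.mem_filter.2 ⟨Finset.mem_univ i, ?_⟩
      linarith [(hyI i).1, (hy₀I i).1]
    have heq := Finset.eq_of_subset_of_card_le hsub
      (hmin _ ((isConvexCone_NN b I).add_mem hyI hy₀I) (hb.add_mem_BB hfin hP hyB hy₀B))
    intro i
    refine ⟨(hyI i).1, fun hi => ?_⟩
    rw [← heq] at hi
    have hi' := (Finset.mem_filter.1 hi).2
    rw [inner_add_left] at hi'
    linarith [(hyI i).1, (hy₀I i).1]
  · refine NN_anti b (fun i hi => ?_) hy
    exact Finset.mem_filter.2 ⟨Finset.mem_univ i, (hy₀I i).2 hi⟩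
  · obtain ⟨v, hv, h⟩ := hatt
    exact ⟨v, hv, h y hy⟩

end PSetup

/-! ### A signed decomposition of the space into faces of chambers -/

lemma exists_perturb (R : Finset V) (y η : V) : ∃ ε : ℝ, 0 < ε ∧ ∀ β ∈ R,
    (⟪y, β⟫ < 0 → ⟪y + ε • η, β⟫ < 0) ∧ (0 < ⟪y, β⟫ → 0 < ⟪y + ε • η, β⟫) := by
  have hev : ∀ᶠ ε : ℝ in nhdsWithin 0 (Set.Ioi 0), ∀ β ∈ R,
      (⟪y, β⟫ < 0 → ⟪y + ε • η, β⟫ < 0) ∧ (0 < ⟪y, β⟫ → 0 < ⟪y + ε • η, β⟫) := by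
    rw [Filter.eventually_all_finset]
    intro β _
    have ht : Filter.Tendsto (fun ε : ℝ => ⟪y + ε • η, β⟫) (nhdsWithin 0 (Set.Ioi 0))
        (nhds ⟪y, β⟫) := by
      have hc : Continuous fun ε : ℝ => ⟪y + ε • η, β⟫ := by fun_prop
      have := hc.tendsto 0
      simp only [zero_smul, add_zero] at this
      exact this.mono_left nhdsWithin_le_nhds
    refine Filter.Eventually.and ?_ ?_
    · by_cases h : ⟪y, β⟫ < 0
      · filter_upwards [ht.eventually_lt_const h] with ε hε _ using hε
      · exact Filter.Eventually.of_forall fun _ h' => absurd h' h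
    · by_cases h : 0 < ⟪y, β⟫
      · filter_upwards [ht.eventually_const_lt h] with ε hε _ using hε
      · exact Filter.Eventually.of_forall fun _ h' => absurd h' h
  obtain ⟨ε, h1, h2⟩ := (hev.and self_mem_nhdsWithin).exists
  exact ⟨ε, h2, h1⟩

open Classical in
/-- The set of right descents of `w`. -/
noncomputable def descents {n : ℕ} (b : Module.Basis (Fin n) ℝ V) (w : V ≃ₗᵢ[ℝ] V) :
    Finset (Fin n) :=
  Finset.univ.filter fun i => ∀ j, b.repr (w (b i)) j ≤ 0

namespace RBase

variable {R : Finset V} {n : ℕ} {b : Module.Basis (Fin n) ℝ V}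

/-- The half-open chambers, obtained from `w C` by removing the walls that belong to descents of
`w`, partition the space: they consist of the points that a small displacement towards the
fundamental chamber moves into the interior of `w C`. -/
lemma partition_chambers (hb : RBase R b) (hfin : (WeylGrp R : Set (V ≃ₗᵢ[ℝ] V)).Finite) (y : V) :
    ∑ w ∈ hfin.toFinset,
      iv (∀ i, ⟪y, w (b i)⟫ ≤ 0 ∧ (i ∈ descents b w → ⟪y, w (b i)⟫ ≠ 0)) = 1 := by
  classical
  obtain ⟨η, hη⟩ := exists_inner b (fun _ => -1)
  obtain ⟨ε, hε, hpert⟩ := exists_perturb R y η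
  have hηβ : ∀ β, ⟪η, β⟫ = -∑ i, b.repr β i := by
    intro β
    rw [inner_eq_sum b, ← Finset.sum_neg_distrib]
    exact Finset.sum_congr rfl fun i _ => by rw [hη]; ring
  have hηpos : ∀ β ∈ R, (∀ i, 0 ≤ b.repr β i) → ⟪η, β⟫ < 0 := by
    intro β hβ h
    rw [hηβ, neg_lt_zero]
    refine (Finset.sum_nonneg fun i _ => h i).lt_of_ne' fun h0 => ?_
    rw [Finset.sum_eq_zero_iff_of_nonneg fun i _ => h i] at h0
    exact hb.not_both hβ h fun i => (h0 i (Finset.mem_univ i)).le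
  have hηneg : ∀ β ∈ R, (∀ i, b.repr β i ≤ 0) → 0 < ⟪η, β⟫ := by
    intro β hβ h
    have := hηpos (-β) (hb.neg_mem hβ) (fun i => by simpa using h i)
    rw [inner_neg_right] at this
    linarith
  have hsum : ∀ β, ⟪y + ε • η, β⟫ = ⟪y, β⟫ + ε * ⟪η, β⟫ := fun β => by
    rw [inner_add_left, real_inner_smul_left]
  have hne : ∀ β ∈ R, ⟪y + ε • η, β⟫ ≠ 0 := by
    intro β hβ
    rcases lt_trichotomy ⟪y, β⟫ 0 with h | h | h
    · exact ((hpert β hβ).1 h).ne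
    · rw [hsum, h, zero_add]
      refine mul_ne_zero hε.ne' ?_
      rcases hb.sgn β hβ with h' | h'
      · exact (hηpos β hβ h').ne
      · exact (hηneg β hβ h').ne'
    · exact ((hpert β hβ).2 h).ne'
  have key : ∀ w ∈ WeylGrp R,
      ((∀ i, ⟪y, w (b i)⟫ ≤ 0 ∧ (i ∈ descents b w → ⟪y, w (b i)⟫ ≠ 0)) ↔
        ∀ i, ⟪y + ε • η, w (b i)⟫ < 0) := by
    intro w hw
    refine forall_congr' fun i => ?_
    have hβ : w (b i) ∈ R := hb.weyl_mem hw (hb.mem i)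
    rcases lt_trichotomy ⟪y, w (b i)⟫ 0 with h | h | h
    · exact ⟨fun _ => (hpert _ hβ).1 h, fun _ => ⟨h.le, fun _ => h.ne⟩⟩
    · rw [hsum, h, zero_add]
      by_cases hd : ∀ j, b.repr (w (b i)) j ≤ 0
      · have h1 := mul_pos hε (hηneg _ hβ hd)
        exact ⟨fun h2 => absurd rfl (h2.2 (by simpa [descents] using hd)),
          fun h2 => absurd h2 h1.not_gt⟩
      · have h1 := mul_neg_of_pos_of_neg hε (hηpos _ hβ ((hb.sgn _ hβ).resolve_right hd))
        exact ⟨fun _ => h1, fun _ => ⟨le_rfl, fun h2 => absurd (by simpa [descents] using h2) hd⟩⟩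
    · have h1 := (hpert _ hβ).2 h
      exact ⟨fun h2 => absurd h2.1 h.not_ge, fun h2 => absurd h2 h1.not_gt⟩
  obtain ⟨w', hw', hch⟩ := hb.exists_chamber hfin (y + ε • η)
  have hw0 : w'⁻¹ ∈ WeylGrp R := inv_mem hw'
  have hstr : ∀ i, ⟪y + ε • η, w'⁻¹ (b i)⟫ < 0 := by
    intro i
    refine lt_of_le_of_ne ?_ (hne _ (hb.weyl_mem hw0 (hb.mem i)))
    have := hch i
    rw [← LinearIsometryEquiv.inner_map_map w'⁻¹] at this
    simpa using this
  rw [Finset.sum_eq_single w'⁻¹]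
  · exact iv_pos ((key _ hw0).2 hstr)
  · intro w hw hww
    have hw : w ∈ WeylGrp R := by simpa using hw
    refine iv_neg fun h => hww ?_
    have h1 := (key w hw).1 h
    have h2 : ∀ u : V ≃ₗᵢ[ℝ] V, ∀ i, ⟪y + ε • η, u (b i)⟫ = ⟪u⁻¹ (y + ε • η), b i⟫ := by
      intro u i
      rw [← LinearIsometryEquiv.inner_map_map u⁻¹]
      simp
    have hx : ∀ i, ⟪w⁻¹ (y + ε • η), b i⟫ < 0 := fun i => by rw [← h2]; exact h1 i
    have hu : w' * w ∈ WeylGrp R := mul_mem hw' hw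
    have h4 : (w' * w) (w⁻¹ (y + ε • η)) = w' (y + ε • η) := by
      rw [isom_mul_apply]
      congr 1
      exact LinearIsometryEquiv.apply_symm_apply w _
    have h3 := hb.chamber_unique (fun i => (hx i).le) hu (fun i => by rw [h4]; exact hch i)
    have h5 := hb.stabilizer_trivial hx hu h3
    exact (inv_eq_of_mul_eq_one_right h5).symm
  · intro h
    exact absurd (by simpa using hw0) h

/-- Inclusion-exclusion over the removed walls. -/
lemma sum_faces (b : Module.Basis (Fin n) ℝ V) (w : V ≃ₗᵢ[ℝ] V) (y : V) :
    ∑ I : Finset (Fin n), (iv (I ⊆ descents b w) * (-1) ^ I.card) *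
      iv (y ∈ NN (b.map w.toLinearEquiv) I) =
    iv (∀ i, ⟪y, w (b i)⟫ ≤ 0 ∧ (i ∈ descents b w → ⟪y, w (b i)⟫ ≠ 0)) := by
  classical
  by_cases hle : ∀ i, ⟪y, w (b i)⟫ ≤ 0
  · set T := (descents b w).filter fun i => ⟪y, w (b i)⟫ = 0 with hT
    have h1 : ∀ I : Finset (Fin n), (iv (I ⊆ descents b w) * (-1) ^ I.card) *
        iv (y ∈ NN (b.map w.toLinearEquiv) I) = if I ∈ T.powerset then (-1) ^ I.card else 0 := by
      intro I
      have h2 : I ∈ T.powerset ↔ I ⊆ descents b w ∧ y ∈ NN (b.map w.toLinearEquiv) I := by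
        rw [Finset.mem_powerset, hT]
        constructor
        · intro h
          refine ⟨h.trans (Finset.filter_subset _ _), fun i => ⟨by simpa using hle i, fun hi => ?_⟩⟩
          simpa using (Finset.mem_filter.1 (h hi)).2
        · rintro ⟨h, h'⟩ i hi
          exact Finset.mem_filter.2 ⟨h hi, by simpa using (h' i).2 hi⟩
      rw [mul_right_comm, ← iv_and, ← iv_congr h2]
      by_cases h3 : I ∈ T.powerset
      · rw [iv_pos h3, if_pos h3, one_mul]
      · rw [iv_neg h3, if_neg h3, zero_mul]
    rw [Finset.sum_congr rfl fun I _ => h1 I, Finset.sum_ite_mem, Finset.univ_inter,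
      Finset.sum_powerset_neg_one_pow_card]
    have h3 : T = ∅ ↔ ∀ i, ⟪y, w (b i)⟫ ≤ 0 ∧ (i ∈ descents b w → ⟪y, w (b i)⟫ ≠ 0) := by
      rw [hT, Finset.filter_eq_empty_iff]
      exact ⟨fun h i => ⟨hle i, fun hi => h hi⟩, fun h i hi => (h i).2 hi⟩
    rw [← iv_congr h3]
    by_cases h4 : T = ∅ <;> simp [iv, h4]
  · rw [iv_neg fun h => hle fun i => (h i).1]
    refine Finset.sum_eq_zero fun I _ => ?_
    rw [iv_neg (p := y ∈ _) fun h => hle fun i => by simpa using (h i).1, mul_zero]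

lemma partition_faces (hb : RBase R b) (hfin : (WeylGrp R : Set (V ≃ₗᵢ[ℝ] V)).Finite) (y : V) :
    ∑ k ∈ hfin.toFinset ×ˢ (Finset.univ : Finset (Finset (Fin n))),
      (iv (k.2 ⊆ descents b k.1) * (-1) ^ k.2.card) * iv (y ∈ NN (b.map k.1.toLinearEquiv) k.2)
      = 1 := by
  rw [Finset.sum_product]
  exact (Finset.sum_congr rfl fun w _ => sum_faces b w y).trans (hb.partition_chambers hfin y)

end RBase

/-! ### Extended deformations are signed sums of translated cones -/

namespace PSetup

variable {R : Finset V} {Pi : Set V} {n : ℕ} {b : Module.Basis (Fin n) ℝ V} {P : Set V}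

/-- A point `x` is outside `P` exactly if some functional that attains a maximum on `P` exceeds that
maximum by at least `1` at `x`. -/
lemma meets_BB_iff (hP : IsExtDef Pi P) (x : V) :
    (∃ y ∈ BB P, y ∈ {y | ∀ q ∈ P, 1 ≤ ⟪y, x - q⟫}) ↔ x ∉ P := by
  constructor
  · rintro ⟨y, -, hy⟩ hx
    have := hy x hx
    rw [sub_self, inner_zero_right] at this
    linarith
  · intro hx
    obtain ⟨v, hv, h⟩ := exists_proj hP.1.1 hP.1.isClosed hP.1.convex x
    have hd : x - v ≠ 0 := fun h0 => hx (by rwa [sub_eq_zero.1 h0])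
    have hpos : 0 < ⟪x - v, x - v⟫ := real_inner_self_pos.2 hd
    refine ⟨(⟪x - v, x - v⟫)⁻¹ • (x - v), smul_mem_BB ⟨v, hv, fun q hq => ?_⟩ (by positivity),
      fun q hq => ?_⟩
    · have := h q hq
      rw [inner_sub_right] at this
      linarith
    · rw [real_inner_smul_left, ← div_eq_inv_mul, le_div_iff₀ hpos, one_mul]
      have h1 := h q hq
      have h2 : x - q = (x - v) - (q - v) := by abel
      rw [h2, inner_sub_right (x - v) (x - v) (q - v)]
      linarith

lemma meets_NN_iff {J : Finset (Fin n)} {v : V} (hv : v ∈ P)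
    (hmax : ∀ y ∈ NN b J, ∀ q ∈ P, ⟪y, q⟫ ≤ ⟪y, v⟫) (x : V) :
    (∃ y ∈ NN b J, y ∈ {y | ∀ q ∈ P, 1 ≤ ⟪y, x - q⟫}) ↔ x - v ∉ CC b J := by
  rw [mem_CC_iff]
  constructor
  · rintro ⟨y, hyJ, hy⟩ h
    have h1 := h y hyJ
    have h2 := hy v hv
    linarith
  · intro h
    push Not at h
    obtain ⟨y, hyJ, hpos⟩ := h
    have hc : 0 ≤ (⟪y, x - v⟫)⁻¹ := by positivity
    refine ⟨(⟪y, x - v⟫)⁻¹ • y, (isConvexCone_NN b J).2.2 _ hc y hyJ, fun q hq => ?_⟩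
    rw [real_inner_smul_left, ← div_eq_inv_mul, le_div_iff₀ hpos, one_mul]
    have h1 := hmax y hyJ q hq
    simp only [inner_sub_right]
    linarith

/-- The indicator function of an extended deformation is an integral combination of indicator
functions of images under the Weyl group of translates of the cones `C_J`. -/
lemma exists_cone_relation (hb : PSetup R Pi b) (hfin : (WeylGrp R : Set (V ≃ₗᵢ[ℝ] V)).Finite)
    (hP : IsExtDef Pi P) :
    ∃ (s : Finset ((V ≃ₗᵢ[ℝ] V) × Finset (Fin n))) (a : (V ≃ₗᵢ[ℝ] V) × Finset (Fin n) → ℤ)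
      (u : (V ≃ₗᵢ[ℝ] V) × Finset (Fin n) → V)
      (J : (V ≃ₗᵢ[ℝ] V) × Finset (Fin n) → Finset (Fin n)),
      (∀ k ∈ s, k.1 ∈ WeylGrp R) ∧
      ∀ x, ∑ k ∈ s, a k * iv (x ∈ k.1 '' transl (u k) (CC b (J k))) = iv (x ∈ P) := by
  classical
  set s := hfin.toFinset ×ˢ (Finset.univ : Finset (Finset (Fin n)))
  set a : (V ≃ₗᵢ[ℝ] V) × Finset (Fin n) → ℤ :=
    fun k => iv (k.2 ⊆ descents b k.1) * (-1) ^ k.2.card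
  have hs : ∀ k ∈ s, k.1 ∈ WeylGrp R := fun k hk => by simpa using (Finset.mem_product.1 hk).1
  have hex : ∀ k : (V ≃ₗᵢ[ℝ] V) × Finset (Fin n), ∃ (J : Finset (Fin n)) (v : V), k ∈ s →
      (v ∈ P ∧ ∀ y ∈ NN (b.map k.1.toLinearEquiv) J, ∀ q ∈ P, ⟪y, q⟫ ≤ ⟪y, v⟫) ∧
      ∀ y, (y ∈ NN (b.map k.1.toLinearEquiv) k.2 ∧ y ∈ BB P) ↔
        y ∈ NN (b.map k.1.toLinearEquiv) J := by
    intro k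
    by_cases hk : k ∈ s
    · obtain ⟨J, ⟨v, hv, h⟩, hJ⟩ := (hb.map (hs k hk)).exists_restrict hfin hP k.2
      exact ⟨J, v, fun _ => ⟨⟨hv, h⟩, hJ⟩⟩
    · exact ⟨∅, 0, fun h => absurd h hk⟩
  choose J v hJv using hex
  refine ⟨s, a, fun k => k.1⁻¹ (v k), J, hs, fun x => ?_⟩
  have hrel : ∀ y, ∑ k ∈ s, a k * iv (y ∈ NN (b.map k.1.toLinearEquiv) (J k)) = iv (y ∈ BB P) := by
    intro y
    have h1 := congrArg (· * iv (y ∈ BB P)) (hb.toRBase.partition_faces hfin y)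
    simp only [one_mul, Finset.sum_mul] at h1
    rw [← h1]
    refine Finset.sum_congr rfl fun k hk => ?_
    rw [← iv_congr ((hJv k hk).2 y), iv_and, ← mul_assoc]
  have hBv : Convex ℝ (BB P) := fun y hy y' hy' c d hc hd _ =>
    hb.add_mem_BB hfin hP (smul_mem_BB hy hc) (smul_mem_BB hy' hd)
  have hKc : IsClosed {y : V | ∀ q ∈ P, 1 ≤ ⟪y, x - q⟫} := by
    simp only [Set.ofPred_forall]
    exact isClosed_iInter fun q => isClosed_iInter fun _ =>
      isClosed_le continuous_const (by fun_prop)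
  have hKv : Convex ℝ {y : V | ∀ q ∈ P, 1 ≤ ⟪y, x - q⟫} := by
    intro y hy y' hy' c d hc hd hcd q hq
    rw [inner_add_left, real_inner_smul_left, real_inner_smul_left, ← hcd]
    have h1 := mul_le_mul_of_nonneg_left (hy q hq) hc
    have h2 := mul_le_mul_of_nonneg_left (hy' q hq) hd
    linarith
  have he := euler_meets_eq s a (fun k => NN (b.map k.1.toLinearEquiv) (J k)) (BB P)
    (fun k _ => isClosed_NN _ _) (fun k _ => (isConvexCone_NN _ _).2.1)
    (hb.isClosed_BB hfin hP) hBv hrel _ hKc hKv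
  rw [iv_congr (meets_BB_iff hP x)] at he
  have h0 := hrel 0
  rw [iv_pos (zero_mem_BB hP)] at h0
  have hnot : ∀ p : Prop, iv p = 1 - iv (¬p) := fun p => by by_cases h : p <;> simp [iv, h]
  rw [hnot (x ∈ P), ← he, ← h0, ← Finset.sum_sub_distrib]
  refine Finset.sum_congr rfl fun k hk => ?_
  rw [iv_pos (isConvexCone_NN _ _).1, iv_congr (meets_NN_iff (hJv k hk).1.1 (hJv k hk).1.2 x),
    ← mul_sub, ← hnot]
  congr 1
  apply iv_congr
  rw [← image_CC]
  constructor
  · rintro ⟨x', hx', rfl⟩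
    rw [mem_transl] at hx'
    refine ⟨_, hx', ?_⟩
    rw [map_sub]
    congr 1
    exact LinearIsometryEquiv.apply_symm_apply k.1 _
  · rintro ⟨d, hd, he⟩
    refine ⟨k.1⁻¹ (v k) + d, mem_transl.2 (by simpa using hd), ?_⟩
    have : k.1 (k.1⁻¹ (v k)) = v k := LinearIsometryEquiv.apply_symm_apply k.1 _
    rw [map_add, he, this]
    abel

end PSetup

/-! ### The simple roots form a base -/

/-- The indecomposable positive roots form a base of the root system: a positive root that is not a
nonnegative combination of them, of minimal height with respect to `z`, would decompose. -/
lemma exists_base (R : Finset V) (h0 : (0 : V) ∉ R)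
    (hspan : Submodule.span ℝ (R : Set V) = ⊤)
    (hrefl : ∀ α ∈ R, ∀ β ∈ R, β - ((2 * ⟪β, α⟫) / ⟪α, α⟫) • α ∈ R)
    (hred : ∀ α ∈ R, ∀ c : ℝ, c • α ∈ (R : Set V) → c = 1 ∨ c = -1)
    (n : ℕ) (hn : n = Module.finrank ℝ V)
    (z : V) (hz : ∀ β ∈ R, ⟪z, β⟫ ≠ 0)
    (α : Fin n → V)
    (hsimple : ∀ β : V,
      (β ∈ R ∧ 0 < ⟪z, β⟫ ∧
        ¬∃ γ ∈ R, ∃ δ ∈ R, 0 < ⟪z, γ⟫ ∧ 0 < ⟪z, δ⟫ ∧ β = γ + δ) ↔ ∃ i, α i = β) :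
    ∃ b : Module.Basis (Fin n) ℝ V, ⇑b = α ∧ RBase R b := by
  classical
  have hneg : ∀ β ∈ R, -β ∈ R := by
    intro β hβ
    have hβ0 : β ≠ 0 := fun h => h0 (h ▸ hβ)
    have := hrefl β hβ β hβ
    rw [mul_div_assoc, div_self (real_inner_self_pos.2 hβ0).ne'] at this
    convert this using 1
    module
  have hpos : ∀ β ∈ R, 0 < ⟪z, β⟫ → ∃ c : Fin n → ℝ, (∀ i, 0 ≤ c i) ∧ β = ∑ i, c i • α i := by
    by_contra! hcon
    obtain ⟨β₀, hβ₀, hβ₀z, hbad₀⟩ := hcon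
    let S := R.filter fun β => 0 < ⟪z, β⟫ ∧
      ∀ c : Fin n → ℝ, (∀ i, 0 ≤ c i) → β ≠ ∑ i, c i • α i
    obtain ⟨β, hβ, hmin⟩ := S.exists_min_image (fun β => ⟪z, β⟫)
      ⟨β₀, Finset.mem_filter.2 ⟨hβ₀, hβ₀z, hbad₀⟩⟩
    obtain ⟨hβR, hβz, hbad⟩ := Finset.mem_filter.1 hβ
    have hgood : ∀ γ ∈ R, 0 < ⟪z, γ⟫ → ⟪z, γ⟫ < ⟪z, β⟫ →
        ∃ c : Fin n → ℝ, (∀ i, 0 ≤ c i) ∧ γ = ∑ i, c i • α i := by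
      intro γ hγ hγz hlt
      by_contra! hb
      exact absurd (hmin γ (Finset.mem_filter.2 ⟨hγ, hγz, hb⟩)) (not_le.2 hlt)
    by_cases hs : ∃ i, α i = β
    · obtain ⟨i, hi⟩ := hs
      refine hbad (Pi.single i 1) (fun j => ?_) ?_
      · by_cases h : j = i
        · subst h; simp
        · simp [h]
      · rw [Finset.sum_eq_single i]
        · simp [hi]
        · intro j _ hj
          simp [hj]
        · simp
    · obtain ⟨γ, hγ, δ, hδ, hγz, hδz, he⟩ := not_not.1 fun h => hs ((hsimple β).1 ⟨hβR, hβz, h⟩)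
      have hzsum : ⟪z, β⟫ = ⟪z, γ⟫ + ⟪z, δ⟫ := by rw [he, inner_add_right]
      obtain ⟨c, hc, hcγ⟩ := hgood γ hγ hγz (by linarith)
      obtain ⟨d, hd, hdδ⟩ := hgood δ hδ hδz (by linarith)
      refine hbad (fun i => c i + d i) (fun i => add_nonneg (hc i) (hd i)) ?_
      simp only [add_smul, Finset.sum_add_distrib]
      rw [he, ← hcγ, ← hdδ]
  have hsgn : ∀ β ∈ R, ∃ c : Fin n → ℝ, ((∀ i, 0 ≤ c i) ∨ (∀ i, c i ≤ 0)) ∧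
      β = ∑ i, c i • α i := by
    intro β hβ
    rcases (hz β hβ).lt_or_gt with h | h
    · obtain ⟨c, hc, he⟩ := hpos (-β) (hneg β hβ) (by rw [inner_neg_right]; linarith)
      refine ⟨fun i => -c i, Or.inr fun i => by simpa using hc i, ?_⟩
      simp only [neg_smul, Finset.sum_neg_distrib]
      rw [← he, neg_neg]
    · obtain ⟨c, hc, he⟩ := hpos β hβ h
      exact ⟨c, Or.inl hc, he⟩
  have htop : ⊤ ≤ Submodule.span ℝ (Set.range α) := by
    rw [← hspan]
    refine Submodule.span_le.2 fun β hβ => ?_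
    obtain ⟨c, -, he⟩ := hsgn β hβ
    rw [he]
    exact Submodule.sum_mem _ fun i _ => Submodule.smul_mem _ _ (Submodule.subset_span ⟨i, rfl⟩)
  have hb : ⇑(basisOfTopLeSpanOfCardEqFinrank α htop (by simpa using hn)) = α :=
    coe_basisOfTopLeSpanOfCardEqFinrank α htop _
  generalize basisOfTopLeSpanOfCardEqFinrank α htop (by simpa using hn) = b at hb
  refine ⟨b, hb, h0, fun α' h' β hβ => ?_, hred, fun i => ?_, fun β hβ => ?_⟩
  · rw [sr_apply]
    exact hrefl α' h' β hβ
  · rw [hb]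
    exact ((hsimple (α i)).2 ⟨i, rfl⟩).1
  · obtain ⟨c, hc, he⟩ := hsgn β hβ
    rw [he, ← hb, b.repr_sum_self]
    exact hc

lemma exists_setup {R : Finset V} {n : ℕ} {b : Module.Basis (Fin n) ℝ V} (hb : RBase R b)
    (hfin : (WeylGrp R : Set (V ≃ₗᵢ[ℝ] V)).Finite)
    (p : V) (hp : ∀ w ∈ WeylGrp R, w p = p → w = 1)
    (Pi : Set V) (hPi : Pi = convexHull ℝ {x : V | ∃ w ∈ WeylGrp R, x = w p}) :
    PSetup R Pi b := by
  obtain ⟨w, hw, hch⟩ := hb.exists_chamber hfin p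
  refine ⟨hb, w p, fun i => lt_of_le_of_ne (hch i) fun h => ?_, ?_⟩
  · have hfix : sr (b i) (w p) = w p := by
      rw [sr_apply, h]
      simp
    have hone := hp (w⁻¹ * sr (b i) * w)
      (mul_mem (mul_mem (inv_mem hw) (sr_mem R (hb.mem i))) hw) (by
        rw [isom_mul_apply, isom_mul_apply, hfix]
        exact LinearIsometryEquiv.symm_apply_apply w p)
    have h1 : sr (b i) = 1 := by
      have := congrArg (fun u => w * u * w⁻¹) hone
      simpa [mul_assoc] using this
    have h2 : sr (b i) (b i) = b i := by
      rw [h1]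
      rfl
    rw [sr_apply, mul_div_assoc, div_self (hb.inner_pos (hb.mem i)).ne'] at h2
    have h3 : (2 : ℝ) • b i = 0 := by simpa using h2
    rw [smul_eq_zero] at h3
    exact hb.ne_zero (hb.mem i) (h3.resolve_left (by norm_num))
  · rw [hPi]
    congr 1
    ext x
    constructor
    · rintro ⟨u, hu, rfl⟩
      refine ⟨u * w⁻¹, mul_mem hu (inv_mem hw), ?_⟩
      rw [isom_mul_apply]
      congr 1
      exact (LinearIsometryEquiv.symm_apply_apply w p).symm
    · rintro ⟨u, hu, rfl⟩
      exact ⟨u * w, mul_mem hu hw, rfl⟩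

/-! ### The universal invariant -/

lemma ivq_eq (p : Prop) : ivq p = (iv p : ℚ) := by by_cases h : p <;> simp [ivq, iv, h]

section Tight

variable {n : ℕ} (b : Module.Basis (Fin n) ℝ V)

lemma map_mem_NN (w : V ≃ₗᵢ[ℝ] V) (I : Finset (Fin n)) (y : V) :
    w y ∈ NN (b.map w.toLinearEquiv) I ↔ y ∈ NN b I := by
  simp [NN]

/-- Tight containment in `w (C_I + v)`, in terms of the polar of `C_I`. -/
lemma tight_map_iff (w : V ≃ₗᵢ[ℝ] V) (I : Finset (Fin n)) (v : V) (P : Set V) :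
    TightContains (w '' coneC b I) (w v) P ↔
      (∀ x ∈ P, ∀ y ∈ NN b I, ⟪w y, x⟫ ≤ ⟪y, v⟫) ∧
        ∃ x ∈ P, ∀ y ∈ NN b I, ⟪w y, x⟫ = ⟪y, v⟫ := by
  have hall : ∀ Q : V → Prop,
      (∀ y ∈ NN (b.map w.toLinearEquiv) I, Q y) ↔ ∀ y ∈ NN b I, Q (w y) := by
    intro Q
    constructor
    · exact fun h y hy => h _ ((map_mem_NN b w I y).2 hy)
    · intro h y hy
      have := h (w.symm y) ((map_mem_NN b w I _).1 (by simpa using hy))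
      simpa using this
  have hco : coneC b I = CC b I := coneC_eq b I
  rw [hco, image_CC, tight_iff]
  simp only [mem_CC_iff, hall, LinearIsometryEquiv.inner_map_map, inner_sub_right, sub_nonpos]

lemma span_iff (I : Finset (Fin n)) (v v' : V) :
    v - v' ∈ Submodule.span ℝ (b '' ↑I) ↔ ∀ y ∈ NN b I, ⟪y, v⟫ = ⟪y, v'⟫ := by
  rw [mem_span_iff, repr_eq_zero_iff]
  simp only [inner_sub_right, sub_eq_zero]

lemma tight_map_congr (w : V ≃ₗᵢ[ℝ] V) {I : Finset (Fin n)} {v v' : V}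
    (h : v - v' ∈ Submodule.span ℝ (b '' ↑I)) (P : Set V) :
    TightContains (w '' coneC b I) (w v) P ↔ TightContains (w '' coneC b I) (w v') P := by
  rw [span_iff] at h
  rw [tight_map_iff, tight_map_iff]
  refine and_congr (forall₂_congr fun x _ => forall₂_congr fun y hy => by rw [h y hy])
    (exists_congr fun x => and_congr_right fun _ => forall₂_congr fun y hy => by rw [h y hy])

lemma tight_map_unique (w : V ≃ₗᵢ[ℝ] V) {I : Finset (Fin n)} {v v' : V} {P : Set V}
    (h : TightContains (w '' coneC b I) (w v) P) (h' : TightContains (w '' coneC b I) (w v') P) :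
    v - v' ∈ Submodule.span ℝ (b '' ↑I) := by
  rw [tight_map_iff] at h h'
  obtain ⟨h1, x, hx, h2⟩ := h
  obtain ⟨h1', x', hx', h2'⟩ := h'
  rw [span_iff]
  intro y hy
  apply le_antisymm
  · rw [← h2 y hy]
    exact h1' x hx y hy
  · rw [← h2' y hy]
    exact h1 x' hx' y hy

lemma tight_map_image (u w : V ≃ₗᵢ[ℝ] V) (I : Finset (Fin n)) (v : V) (P : Set V) :
    TightContains ((u * w : V ≃ₗᵢ[ℝ] V) '' coneC b I) ((u * w) v) (u '' P) ↔
      TightContains (w '' coneC b I) (w v) P := by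
  rw [tight_map_iff, tight_map_iff]
  simp only [Set.forall_mem_image, Set.exists_mem_image, isom_mul_apply,
    LinearIsometryEquiv.inner_map_map]

end Tight

namespace RBase

variable {R : Finset V} {n : ℕ} {b : Module.Basis (Fin n) ℝ V}

/-- The cone `C_J + u` is tightly contained in `w (C_I + v)` exactly if `J ⊆ I`, the pairs `(I, u)`
and `(I, v)` are equivalent, and `w` stabilizes the face `NN b I` of the chamber pointwise. -/
lemma tight_cone_iff (hb : RBase R b) {w : V ≃ₗᵢ[ℝ] V} (hw : w ∈ WeylGrp R)
    (I J : Finset (Fin n)) (u v : V) :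
    TightContains (w '' coneC b I) (w v) (transl u (CC b J)) ↔
      (J ⊆ I ∧ u - v ∈ Submodule.span ℝ (b '' ↑I)) ∧ ∀ y ∈ NN b I, w y = y := by
  rw [tight_map_iff, span_iff]
  have hC := isConvexCone_CC b J
  have hmem : ∀ d ∈ CC b J, u + d ∈ transl u (CC b J) := fun d hd => ⟨d, hd, rfl⟩
  have humem : u ∈ transl u (CC b J) := by simpa using hmem 0 hC.1
  constructor
  · rintro ⟨h1, x, hx, h2⟩
    have hle : ∀ y ∈ NN b I, ∀ d ∈ CC b J, ⟪w y, d⟫ ≤ 0 := by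
      intro y hy d hd
      by_contra! hlt
      obtain ⟨t, ht⟩ := exists_gt (max 0 ((⟪y, v⟫ - ⟪w y, u⟫) / ⟪w y, d⟫))
      have ht0 : 0 < t := (le_max_left _ _).trans_lt ht
      have ht1 := (div_lt_iff₀ hlt).1 ((le_max_right _ _).trans_lt ht)
      have := h1 _ (hmem _ (hC.2.2 t ht0.le d hd)) y hy
      rw [inner_add_right, inner_smul_right] at this
      linarith
    have hfix : ∀ y ∈ NN b I, w y = y := fun y hy =>
      hb.chamber_unique (fun i => (hy i).1) hw fun i => hle y hy _ (basis_mem_CC b J i)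
    refine ⟨⟨fun j hj => ?_, fun y hy => ?_⟩, hfix⟩
    · obtain ⟨y, hy⟩ := exists_relInt b I
      have h3 := hle y hy.mem _ (neg_basis_mem_CC b hj)
      rw [hfix y hy.mem, inner_neg_right] at h3
      exact (hy j).2.2 (le_antisymm (hy j).1 (by linarith))
    · have h3 := h1 u humem y hy
      have h4 := hle y hy (x - u) (mem_transl.1 hx)
      have h5 := h2 y hy
      rw [hfix y hy] at h3 h4 h5
      rw [inner_sub_right] at h4
      linarith
  · rintro ⟨⟨hJI, huv⟩, hfix⟩
    refine ⟨fun x hx y hy => ?_, u, humem, fun y hy => by rw [hfix y hy, huv y hy]⟩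
    have := (mem_CC_iff b J _).1 (mem_transl.1 hx) y (NN_anti b hJI hy)
    rw [inner_sub_right] at this
    rw [hfix y hy, ← huv y hy]
    linarith

end RBase

section Universal

variable {R : Finset V} {n : ℕ} (b : Module.Basis (Fin n) ℝ V)
  (hfin : (WeylGrp R : Set (V ≃ₗᵢ[ℝ] V)).Finite)

/-- The coefficients of `𝒢⁺(P)`, as a function on `2^[n] ⊠ V`. -/
noncomputable def coeffG (P : Set V) : Quotient (boxSetoid (n := n) b) → ℚ :=
  Quotient.lift
    (fun k => ∑ w ∈ hfin.toFinset, ivq (TightContains (w '' coneC b k.1) (w k.2) P)) (by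
      rintro ⟨I, v⟩ ⟨I', v'⟩ ⟨h1, h2⟩
      obtain rfl : I = I' := h1
      exact Finset.sum_congr rfl fun w _ => congrArg ivq (propext (tight_map_congr b w h2 P)))

lemma coeffG_support (P : Set V) : (Function.support (coeffG b hfin P)).Finite := by
  have hsub : Function.support (coeffG b hfin P) ⊆
      ⋃ w ∈ (WeylGrp R : Set (V ≃ₗᵢ[ℝ] V)), ⋃ I : Finset (Fin n),
        {q | ∃ v, q = Quotient.mk (boxSetoid b) (I, v) ∧
          TightContains (w '' coneC b I) (w v) P} := by
    intro q
    induction q using Quotient.inductionOn with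
    | h k =>
      obtain ⟨I, v⟩ := k
      intro hq
      obtain ⟨w, hw, hne⟩ := Finset.exists_ne_zero_of_sum_ne_zero hq
      have ht : TightContains (w '' coneC b I) (w v) P := by
        by_contra ht
        exact hne (by simp [ivq, ht])
      simp only [Set.mem_iUnion]
      exact ⟨w, by simpa using hw, I, v, rfl, ht⟩
  refine Set.Finite.subset (hfin.biUnion fun w _ => Set.finite_iUnion fun I => ?_) hsub
  apply Set.Subsingleton.finite
  rintro _ ⟨v₁, rfl, ht₁⟩ _ ⟨v₂, rfl, ht₂⟩
  exact Quotient.sound ⟨rfl, tight_map_unique b w ht₁ ht₂⟩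

/-- The function `𝒢⁺`. -/
noncomputable def invG (P : Set V) : Quotient (boxSetoid (n := n) b) →₀ ℚ :=
  Finsupp.ofSupportFinite (coeffG b hfin P) (coeffG_support b hfin P)

lemma invG_apply (P : Set V) (I : Finset (Fin n)) (v : V) :
    invG b hfin P (Quotient.mk (boxSetoid b) (I, v)) =
      ∑ w ∈ hfin.toFinset, ivq (TightContains (w '' coneC b I) (w v) P) := rfl

lemma invG_image {u : V ≃ₗᵢ[ℝ] V} (hu : u ∈ WeylGrp R) (P : Set V) :
    invG b hfin (u '' P) = invG b hfin P := by
  ext q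
  induction q using Quotient.inductionOn with
  | h k =>
    obtain ⟨I, v⟩ := k
    rw [invG_apply, invG_apply]
    symm
    refine Finset.sum_bij (fun w _ => u * w) ?_ ?_ ?_ ?_
    · intro w hw
      simp only [Set.Finite.mem_toFinset, SetLike.mem_coe] at hw ⊢
      exact mul_mem hu hw
    · intro w _ w' _ h
      exact mul_left_cancel h
    · intro w hw
      simp only [Set.Finite.mem_toFinset, SetLike.mem_coe] at hw
      exact ⟨u⁻¹ * w, by simpa using mul_mem (inv_mem hu) hw, by simp⟩
    · intro w _
      exact congrArg ivq (propext (tight_map_image b u w I v P).symm)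

variable {b}

lemma invG_valuative {Pi : Set V} (hb : PSetup R Pi b) :
    Valuative {P : Set V | IsExtDef Pi P} (invG b hfin) := by
  intro k a P hP h
  ext q
  induction q using Quotient.inductionOn with
  | h j =>
    obtain ⟨I, v⟩ := j
    rw [Finsupp.finsetSum_apply]
    simp only [Finsupp.smul_apply, invG_apply, Finset.smul_sum, Finsupp.zero_apply]
    rw [Finset.sum_comm]
    refine Finset.sum_eq_zero fun w hw => ?_
    have hw' : w ∈ WeylGrp R := by simpa using hw
    have := (hb.map hw').tight_valuative I (w v) a P hP h
    have hco : coneC b I = CC b I := coneC_eq b I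
    rw [← image_CC, ← hco] at this
    simp only [ivq_eq, zsmul_eq_mul]
    exact_mod_cast this

open Classical in
/-- The number of elements of the Weyl group that fix the face `NN b I` of the chamber pointwise. -/
noncomputable def stabCard (b : Module.Basis (Fin n) ℝ V)
    (hfin : (WeylGrp R : Set (V ≃ₗᵢ[ℝ] V)).Finite) (I : Finset (Fin n)) : ℚ :=
  (hfin.toFinset.filter fun w => ∀ y ∈ NN b I, w y = y).card

lemma stabCard_ne_zero (I : Finset (Fin n)) : stabCard b hfin I ≠ 0 := by
  rw [stabCard, Nat.cast_ne_zero]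
  refine Finset.card_ne_zero_of_mem (a := 1) ?_
  simp

lemma invG_cone (hb : RBase R b) (J : Finset (Fin n)) (u : V) :
    invG b hfin (transl u (CC b J)) =
      ∑ I with J ⊆ I, Finsupp.single (Quotient.mk (boxSetoid b) (I, u)) (stabCard b hfin I) := by
  classical
  ext q
  induction q using Quotient.inductionOn with
  | h k =>
    obtain ⟨I, v⟩ := k
    rw [invG_apply, Finsupp.finsetSum_apply]
    have hmk : ∀ I', Quotient.mk (boxSetoid b) (I', u) = Quotient.mk (boxSetoid b) (I, v) ↔
        I' = I ∧ u - v ∈ Submodule.span ℝ (b '' ↑I') := fun I' => Quotient.eq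
    have hL : ∀ w ∈ hfin.toFinset,
        ivq (TightContains (w '' coneC b I) (w v) (transl u (CC b J))) =
          if (J ⊆ I ∧ u - v ∈ Submodule.span ℝ (b '' ↑I)) then
            (if ∀ y ∈ NN b I, w y = y then 1 else 0) else 0 := by
      intro w hw
      have hw' : w ∈ WeylGrp R := by simpa using hw
      rw [propext (hb.tight_cone_iff hw' I J u v), ivq, ← ite_and]
      congr
    rw [Finset.sum_congr rfl hL]
    by_cases hc : J ⊆ I ∧ u - v ∈ Submodule.span ℝ (b '' ↑I)
    · simp only [if_pos hc]
      rw [Finset.sum_eq_single I]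
      · rw [(hmk I).2 ⟨rfl, hc.2⟩, Finsupp.single_eq_same, stabCard, Finset.sum_boole]
      · intro I' _ hne
        rw [Finsupp.single_apply, if_neg fun h => hne ((hmk I').1 h).1]
      · intro h
        exact absurd (by simpa using hc.1) h
    · simp only [if_neg hc, Finset.sum_const_zero]
      symm
      refine Finset.sum_eq_zero fun I' hI' => ?_
      rw [Finsupp.single_apply, if_neg]
      intro h
      obtain ⟨rfl, h2⟩ := (hmk I').1 h
      exact hc ⟨by simpa using hI', h2⟩

end Universal

/-- A valuative function respects relations that express one indicator function by others. -/
lemma Valuative.sum_eq {X A : Type*} [AddCommGroup A] {Fam : Set (Set X)} {f : Set X → A}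
    (hf : Valuative Fam f) {ι : Type*} (s : Finset ι) (a : ι → ℤ) (P : ι → Set X) {B : Set X}
    (hP : ∀ i ∈ s, P i ∈ Fam) (hB : B ∈ Fam)
    (h : ∀ x, ∑ i ∈ s, a i * iv (x ∈ P i) = iv (x ∈ B)) :
    ∑ i ∈ s, a i • f (P i) = f B := by
  have := hf.sum_eq_zero (Finset.insertNone s) (fun o => o.elim (-1) a) (fun o => o.elim B P) ?_ ?_
  · simp only [Finset.sum_insertNone, Option.elim, neg_smul, one_smul] at this
    exact (neg_add_eq_zero.1 this).symm
  · intro o ho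
    cases o with
    | none => exact hB
    | some i => exact hP i (by simpa using ho)
  · intro x
    simp only [Finset.sum_insertNone, Option.elim]
    rw [h x]; ring

lemma sum_interval_sign {n : ℕ} (J K : Finset (Fin n)) (h : J ⊆ K) :
    ∑ I ∈ Finset.Icc J K, (-1 : ℤ) ^ (K.card + I.card) = if K = J then 1 else 0 := by
  classical
  rw [Finset.Icc_eq_image_powerset h, Finset.sum_image]
  · have h1 : ∀ T ∈ (K \ J).powerset, (-1 : ℤ) ^ (K.card + (J ∪ T).card) =
        (-1) ^ (K.card + J.card) * (-1) ^ T.card := by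
      intro T hT
      have hd : Disjoint J T :=
        (Finset.disjoint_sdiff).mono_right (Finset.mem_powerset.1 hT)
      rw [Finset.card_union_of_disjoint hd, ← pow_add, add_assoc]
    rw [Finset.sum_congr rfl h1, ← Finset.mul_sum, Finset.sum_powerset_neg_one_pow_card]
    by_cases hKJ : K = J
    · subst hKJ
      simp [← two_mul, pow_mul]
    · rw [if_neg hKJ, if_neg, mul_zero]
      rw [Finset.sdiff_eq_empty_iff_subset]
      exact fun h' => hKJ (Finset.Subset.antisymm h' h)
  · intro T hT T' hT' he
    have hd : ∀ T ∈ (K \ J).powerset, (J ∪ T) \ J = T := fun T hT => by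
      rw [Finset.union_sdiff_left]
      exact Finset.sdiff_eq_self_of_disjoint
        ((Finset.disjoint_sdiff).mono_right (Finset.mem_powerset.1 hT)).symm
    rw [← hd T hT, ← hd T' hT']
    exact congrArg (· \ J) he

/-- Möbius inversion on the Boolean lattice. -/
lemma moebius_boolean {n : ℕ} {A : Type*} [AddCommGroup A] (f : Finset (Fin n) → A)
    (J : Finset (Fin n)) :
    ∑ I with J ⊆ I, ∑ K with I ⊆ K, ((-1 : ℤ) ^ (K.card + I.card)) • f K = f J := by
  classical
  rw [Finset.sum_comm' (s' := fun K => Finset.Icc J K) (t' := Finset.univ.filter (J ⊆ ·))]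
  · rw [Finset.sum_congr rfl fun K hK => by
      rw [← Finset.sum_smul, sum_interval_sign J K (by simpa using hK)]]
    rw [Finset.sum_eq_single J]
    · simp
    · intro K _ hK
      rw [if_neg hK, zero_smul]
    · intro h
      simp at h
  · intro I K
    simp only [Finset.mem_filter, Finset.mem_univ, true_and, Finset.mem_Icc]
    exact ⟨fun h => ⟨h, h.1.trans h.2⟩, fun h => h.1⟩

lemma transl_congr {n : ℕ} (b : Module.Basis (Fin n) ℝ V) {I J : Finset (Fin n)} (h : J ⊆ I)
    {u u' : V} (hu : u - u' ∈ Submodule.span ℝ (b '' ↑J)) :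
    transl u (CC b I) = transl u' (CC b I) := by
  ext x
  rw [mem_transl, mem_transl]
  refine forall₂_congr fun i hi => ?_
  have := (mem_span_iff b J _).1 hu i fun h' => hi (h h')
  rw [map_sub, Finsupp.sub_apply] at this
  rw [map_sub, map_sub, Finsupp.sub_apply, Finsupp.sub_apply]
  constructor <;> intro h' <;> linarith

section Main

variable {A : Type*} [AddCommGroup A] [Module ℚ A]
  {R : Finset V} {Pi : Set V} {n : ℕ} {b : Module.Basis (Fin n) ℝ V}
  (hfin : (WeylGrp R : Set (V ≃ₗᵢ[ℝ] V)).Finite)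

/-- Linear maps are determined by their values on `𝒢⁺(C_J + u)`, since these are unitriangular up
to nonzero factors with respect to the standard basis. -/
lemma linear_ext (hb : RBase R b) (ψ : (Quotient (boxSetoid (n := n) b) →₀ ℚ) →ₗ[ℚ] A)
    (h : ∀ J u, ψ (invG b hfin (transl u (CC b J))) = 0) : ψ = 0 := by
  classical
  have key : ∀ k, ∀ (J : Finset (Fin n)) (u : V), (Jᶜ).card = k →
      ψ (Finsupp.single (Quotient.mk (boxSetoid b) (J, u)) 1) = 0 := by
    intro k
    induction k using Nat.strong_induction_on with
    | _ k ih =>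
      intro J u hk
      have h1 := h J u
      have hs : ∀ (I : Finset (Fin n)) (c : ℚ),
          ψ (Finsupp.single (Quotient.mk (boxSetoid b) (I, u)) c) =
            c • ψ (Finsupp.single (Quotient.mk (boxSetoid b) (I, u)) 1) := by
        intro I c
        rw [← map_smul, Finsupp.smul_single, smul_eq_mul, mul_one]
      rw [invG_cone hfin hb, map_sum, Finset.sum_eq_single J, hs] at h1
      · exact (smul_eq_zero.1 h1).resolve_left (stabCard_ne_zero hfin J)
      · intro I hI hne
        have hJI : J ⊂ I := lt_of_le_of_ne (by simpa using hI) (Ne.symm hne)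
        rw [hs, ih _ ?_ I u rfl, smul_zero]
        rw [← hk]
        exact Finset.card_lt_card (Finset.compl_ssubset_compl.2 hJI)
      · intro h'
        simp at h'
  ext q
  induction q using Quotient.inductionOn with
  | h k => simpa using key _ k.1 k.2 rfl

/-- The values `ψ(e_{(J,u)})` forced by `ψ(𝒢⁺(C_I + u)) = g(C_I + u)`. -/
noncomputable def psiVal (b : Module.Basis (Fin n) ℝ V)
    (hfin : (WeylGrp R : Set (V ≃ₗᵢ[ℝ] V)).Finite) (g : Set V → A) :
    Quotient (boxSetoid (n := n) b) → A :=
  Quotient.lift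
    (fun k => (stabCard b hfin k.1)⁻¹ •
      ∑ K with k.1 ⊆ K, ((-1 : ℤ) ^ (K.card + k.1.card)) • g (transl k.2 (CC b K))) (by
      rintro ⟨I, v⟩ ⟨I', v'⟩ ⟨h1, h2⟩
      obtain rfl : I = I' := h1
      refine congrArg _ (Finset.sum_congr rfl fun K hK => ?_)
      simp only [Finset.mem_filter, Finset.mem_univ, true_and] at hK
      rw [show transl (I, v).2 (CC b K) = transl (I, v').2 (CC b K) from transl_congr b hK h2])

lemma psi_cone (hb : RBase R b) (g : Set V → A) (J : Finset (Fin n)) (u : V) :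
    Finsupp.linearCombination ℚ (psiVal b hfin g) (invG b hfin (transl u (CC b J))) =
      g (transl u (CC b J)) := by
  rw [invG_cone hfin hb, map_sum, ← moebius_boolean (fun K => g (transl u (CC b K))) J]
  refine Finset.sum_congr rfl fun I _ => ?_
  rw [Finsupp.linearCombination_single]
  exact smul_inv_smul₀ (stabCard_ne_zero hfin I) _

lemma image_transl (w : V ≃ₗᵢ[ℝ] V) (u : V) (C : Set V) :
    w '' transl u C = transl (w u) (w '' C) := by
  simp only [transl, Set.image_image, map_add]

/-- Two valuative invariants that agree on the cones `C_J + u` are equal. -/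
lemma eq_of_eq_on_cones (hfin : (WeylGrp R : Set (V ≃ₗᵢ[ℝ] V)).Finite) (hb : PSetup R Pi b)
    {f g : Set V → A}
    (hf : Valuative {P : Set V | IsExtDef Pi P} f) (hg : Valuative {P : Set V | IsExtDef Pi P} g)
    (hfw : ∀ w ∈ WeylGrp R, ∀ P : Set V, IsExtDef Pi P → f (⇑w '' P) = f P)
    (hgw : ∀ w ∈ WeylGrp R, ∀ P : Set V, IsExtDef Pi P → g (⇑w '' P) = g P)
    (h : ∀ J u, f (transl u (CC b J)) = g (transl u (CC b J))) {P : Set V} (hP : IsExtDef Pi P) :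
    f P = g P := by
  obtain ⟨s, a, u, J, hs, hrel⟩ := hb.exists_cone_relation hfin hP
  have hmem : ∀ k ∈ s, (k.1 '' transl (u k) (CC b (J k))) ∈ {P : Set V | IsExtDef Pi P} := by
    intro k hk
    rw [image_transl, image_CC]
    exact (hb.map (hs k hk)).isExtDef_CC _ _
  rw [← hf.sum_eq s a _ hmem hP hrel, ← hg.sum_eq s a _ hmem hP hrel]
  refine Finset.sum_congr rfl fun k hk => ?_
  have hc := hb.isExtDef_CC (J k) (u k)
  rw [hfw _ (hs k hk) _ hc, hgw _ (hs k hk) _ hc, h]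

lemma exists_unique_psi (hb : PSetup R Pi b) (g : Set V → A)
    (hg : Valuative {P : Set V | IsExtDef Pi P} g)
    (hgw : ∀ w ∈ WeylGrp R, ∀ P : Set V, IsExtDef Pi P → g (⇑w '' P) = g P) :
    ∃! ψ : (Quotient (boxSetoid (n := n) b) →₀ ℚ) →ₗ[ℚ] A,
      ∀ P : Set V, IsExtDef Pi P → ψ (invG b hfin P) = g P := by
  refine ⟨Finsupp.linearCombination ℚ (psiVal b hfin g), fun P hP => ?_, fun ψ hψ => ?_⟩
  · refine eq_of_eq_on_cones hfin hb
      (f := fun P => Finsupp.linearCombination ℚ (psiVal b hfin g) (invG b hfin P)) ?_ hg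
      (fun w hw P _ => ?_) hgw (psi_cone hfin hb.toRBase g) hP
    · intro k a P hP h
      have := congrArg (Finsupp.linearCombination ℚ (psiVal b hfin g))
        (invG_valuative hfin hb k a P hP h)
      simpa only [map_sum, map_zsmul, map_zero] using this
    · rw [invG_image b hfin hw]
  · rw [← sub_eq_zero]
    refine linear_ext hfin hb.toRBase _ fun J u => ?_
    rw [LinearMap.sub_apply, hψ _ (hb.isExtDef_CC J u), psi_cone hfin hb.toRBase, sub_self]

end Main

/-- the function `𝒢⁺` is the universal valuative invariant of extended
generalized `Φ`-permutohedra over `ℚ`. -/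
theorem universal_valuative_invariant_GP {A : Type*} [AddCommGroup A] [Module ℚ A]
    (R : Finset V) (h0 : (0 : V) ∉ R)
    (hspan : Submodule.span ℝ (R : Set V) = ⊤)
    (hrefl : ∀ α ∈ R, ∀ β ∈ R, β - ((2 * ⟪β, α⟫) / ⟪α, α⟫) • α ∈ R)
    (hred : ∀ α ∈ R, ∀ c : ℝ, c • α ∈ (R : Set V) → c = 1 ∨ c = -1)
    (hWfin : (WeylGrp R : Set (V ≃ₗᵢ[ℝ] V)).Finite)
    (n : ℕ) (hn : n = Module.finrank ℝ V)
    (z : V) (hz : ∀ β ∈ R, ⟪z, β⟫ ≠ 0)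
    (α : Fin n → V) (hαinj : Function.Injective α)
    (hsimple : ∀ β : V,
      (β ∈ R ∧ 0 < ⟪z, β⟫ ∧
        ¬∃ γ ∈ R, ∃ δ ∈ R, 0 < ⟪z, γ⟫ ∧ 0 < ⟪z, δ⟫ ∧ β = γ + δ) ↔ ∃ i, α i = β)
    (p : V) (hp : ∀ w ∈ WeylGrp R, w p = p → w = 1)
    (Pi : Set V) (hPi : Pi = convexHull ℝ {x : V | ∃ w ∈ WeylGrp R, x = w p}) :
    ∃ G : Set V → (Quotient (boxSetoid α) →₀ ℚ),
      (∀ P : Set V, IsExtDef Pi P → ∀ (I : Finset (Fin n)) (v : V),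
        G P (Quotient.mk (boxSetoid α) (I, v)) =
          ∑ w ∈ hWfin.toFinset, ivq (TightContains (⇑w '' coneC α I) (w v) P)) ∧
      Valuative {P : Set V | IsExtDef Pi P} G ∧
      (∀ w ∈ WeylGrp R, ∀ P : Set V, IsExtDef Pi P → G (⇑w '' P) = G P) ∧
      ∀ g : Set V → A, Valuative {P : Set V | IsExtDef Pi P} g →
        (∀ w ∈ WeylGrp R, ∀ P : Set V, IsExtDef Pi P → g (⇑w '' P) = g P) →
        ∃! ψ : (Quotient (boxSetoid α) →₀ ℚ) →ₗ[ℚ] A,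
          ∀ P : Set V, IsExtDef Pi P → ψ (G P) = g P := by
  obtain ⟨b, rfl, hb⟩ := exists_base R h0 hspan hrefl hred n hn z hz α hsimple
  have hS := exists_setup hb hWfin p hp Pi hPi
  exact ⟨invG b hWfin, fun P _ I v => invG_apply b hWfin P I v, invG_valuative hWfin hS,
    fun w hw P _ => invG_image b hWfin hw P, fun g hg hgw => exists_unique_psi hWfin hS g hg hgw⟩
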